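/- arXiv:1501.00333 — 2 statements merged into one kernel-verified Lean document; each statement's English description precedes it below -/
import Mathlib

section
/- Let G be a complex reductive group acting rationally on a finitely generated commutative C-algebra A by algebra automorphisms. Then the ring of invariants A^G is a finitely generated C-algebra. -/
lemma hfg_bdd {T M : Type} [CommRing T] [AddCommGroup M] [Module T M] (f : T)
    (V W : Submodule T M) (hV : V.FG) (h : ∀ v ∈ V, ∃ m : ℕ, f ^ m • v ∈ W) :
    ∃ N : ℕ, ∀ v ∈ V, f ^ N • v ∈ W := by
  classical
  obtain ⟨s, rfl⟩ := hV
  have h1 : ∀ t : Finset M, t ⊆ s → ∃ N : ℕ, ∀ v ∈ t, f ^ N • v ∈ W := by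
    intro t
    induction t using Finset.induction_on with
    | empty => intro _; exact ⟨0, by simp⟩
    | insert a t ha ih =>
      intro hs
      obtain ⟨N, hN⟩ := ih (fun x hx => hs (Finset.mem_insert_of_mem hx))
      obtain ⟨m, hm⟩ := h a (Submodule.subset_span (hs (Finset.mem_insert_self _ _)))
      refine ⟨N + m, fun v hv => ?_⟩
      rcases Finset.mem_insert.1 hv with rfl | hv
      · rw [pow_add, mul_smul]; exact W.smul_mem _ hm
      · rw [add_comm, pow_add, mul_smul]; exact W.smul_mem _ (hN v hv)
  obtain ⟨N, hN⟩ := h1 s (le_refl _)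
  refine ⟨N, fun v hv => ?_⟩
  have : Submodule.span T (s : Set M) ≤ W.comap (LinearMap.lsmul T M (f ^ N)) :=
    Submodule.span_le.2 fun x hx => hN x hx
  exact this hv

lemma happ_pow {S T : Type} [CommRing S] [CommRing T] (i : S →+* T) (f : S)
    (happ : ∀ t : T, ∃ (s : S) (t' : T), t = i s + i f * t') (n : ℕ) (t : T) :
    ∃ (s : S) (t' : T), t = i s + i f ^ n * t' := by
  induction n with
  | zero => exact ⟨0, t, by simp⟩
  | succ n ih =>
    obtain ⟨s, t', h⟩ := ih
    obtain ⟨s', t'', h'⟩ := happ t'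
    exact ⟨s + f ^ n * s', t'', by rw [h, h']; simp; ring⟩

/-- Lifting of relations with a uniform bound on the denominators. -/
lemma rel_lift {S T : Type} [CommRing S] [CommRing T] [IsNoetherianRing T] (i : S →+* T)
    (hi : Function.Injective i) (f : S)
    (happ : ∀ t : T, ∃ (s : S) (t' : T), t = i s + i f * t')
    (hden : ∀ t : T, ∃ (m : ℕ) (s : S), i f ^ m * t = i s)
    {r : ℕ} (p : Fin r → S) :
    ∃ N : ℕ, ∀ (n : ℕ) (x : S) (y : T), x ∈ Ideal.span (Set.range p) →
      y ∈ Ideal.map i (Ideal.span (Set.range p)) → i x = i f ^ n * y →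
      ∃ e : Fin r → S, f ^ N * x = ∑ j, e j * p j ∧ ∀ j, ∃ t, i (e j) = i f ^ n * t := by
  classical
  let L : (Fin r → T) →ₗ[T] T := Fintype.linearCombination T (fun j => i (p j))
  have hL : ∀ q, L q = ∑ j, q j * i (p j) := fun q => by
    simp [L, Fintype.linearCombination_apply]
  let W : Submodule T (Fin r → T) :=
    Submodule.span T {q | ∃ σ : Fin r → S, ∑ j, σ j * p j = 0 ∧ q = fun j => i (σ j)}
  have hden' : ∀ q : Fin r → T, ∃ (m : ℕ) (σ : Fin r → S), ∀ j, i f ^ m * q j = i (σ j) := by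
    intro q
    choose m s hs using fun j => hden (q j)
    refine ⟨∑ j, m j, fun j => f ^ (∑ j, m j - m j) * s j, fun j => ?_⟩
    have : m j ≤ ∑ j, m j := Finset.single_le_sum (f := m) (fun _ _ => Nat.zero_le _) (Finset.mem_univ j)
    rw [map_mul, ← hs, map_pow, ← mul_assoc, ← pow_add, Nat.sub_add_cancel this]
  obtain ⟨N, hN⟩ := hfg_bdd (i f) (LinearMap.ker L) W (IsNoetherian.noetherian _) (by
    intro q hq
    obtain ⟨m, σ, hσ⟩ := hden' q
    refine ⟨m, Submodule.subset_span ⟨σ, ?_, ?_⟩⟩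
    · apply hi
      rw [LinearMap.mem_ker, hL] at hq
      simp only [map_sum, map_mul, ← hσ, map_zero, mul_assoc]
      rw [← Finset.mul_sum, hq, mul_zero]
    · ext j; simp [hσ])
  refine ⟨N, fun n x y hx hy hxy => ?_⟩
  obtain ⟨e, he⟩ := Ideal.mem_span_range_iff_exists_fun.1 hx
  rw [Ideal.map_span, ← Set.range_comp] at hy
  obtain ⟨q, hq⟩ := Ideal.mem_span_range_iff_exists_fun.1 hy
  have hker : (fun j => i f ^ n * q j - i (e j)) ∈ LinearMap.ker L := by
    rw [LinearMap.mem_ker, hL]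
    simp only [sub_mul, Finset.sum_sub_distrib, mul_assoc, ← Finset.mul_sum]
    simp only [Function.comp] at hq
    rw [hq, ← hxy, ← he]; simp
  have hW : ∀ w ∈ W, ∃ σ : Fin r → S, ∑ j, σ j * p j = 0 ∧
      ∀ j, ∃ t, w j = i (σ j) + i f ^ n * t := by
    intro w hw
    induction hw using Submodule.span_induction with
    | mem w hw =>
      obtain ⟨σ, h, rfl⟩ := hw
      exact ⟨σ, h, fun j => ⟨0, by simp⟩⟩
    | zero => exact ⟨0, by simp, fun j => ⟨0, by simp⟩⟩
    | add a b _ _ ha hb =>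
      obtain ⟨σ, h, k⟩ := ha
      obtain ⟨σ', h', k'⟩ := hb
      refine ⟨σ + σ', by simp [add_mul, Finset.sum_add_distrib, h, h'], fun j => ?_⟩
      obtain ⟨t, ht⟩ := k j
      obtain ⟨t', ht'⟩ := k' j
      exact ⟨t + t', by simp [ht, ht']; ring⟩
    | smul b w _ hw =>
      obtain ⟨σ, h, k⟩ := hw
      obtain ⟨c, b', hb⟩ := happ_pow i f happ n b
      refine ⟨fun j => c * σ j, by simp [mul_assoc, ← Finset.mul_sum, h], fun j => ?_⟩
      obtain ⟨t, ht⟩ := k j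
      refine ⟨b' * i (σ j) + b * t, ?_⟩
      simp only [Pi.smul_apply, smul_eq_mul, ht, map_mul]
      rw [hb]; ring
  obtain ⟨σ, hσ, k⟩ := hW _ (hN _ hker)
  refine ⟨fun j => f ^ N * e j + σ j, ?_, fun j => ?_⟩
  · simp [add_mul, Finset.sum_add_distrib, hσ, mul_assoc, ← Finset.mul_sum, he]
  · obtain ⟨t, ht⟩ := k j
    simp only [Pi.smul_apply, smul_eq_mul] at ht
    refine ⟨i f ^ N * q j - t, ?_⟩
    simp only [map_add, map_mul, map_pow]
    linear_combination - ht

lemma poly_den {σ C B : Type} [CommRing C] [CommRing B] (i : C →+* B) (f : C)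
    (hden : ∀ t : B, ∃ (m : ℕ) (s : C), i f ^ m * t = i s) (t : MvPolynomial σ B) :
    ∃ (m : ℕ) (s : MvPolynomial σ C),
      MvPolynomial.map i (MvPolynomial.C f) ^ m * t = MvPolynomial.map i s := by
  induction t using MvPolynomial.induction_on with
  | C b =>
    obtain ⟨m, s, h⟩ := hden b
    exact ⟨m, MvPolynomial.C s, by simp [← h]⟩
  | add p q hp hq =>
    obtain ⟨m, s, h⟩ := hp
    obtain ⟨m', s', h'⟩ := hq
    refine ⟨m + m', MvPolynomial.C f ^ m' * s + MvPolynomial.C f ^ m * s', ?_⟩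
    rw [map_add, map_mul, map_mul, ← h, ← h', map_pow, map_pow]; ring
  | mul_X p j hp =>
    obtain ⟨m, s, h⟩ := hp
    exact ⟨m, s * MvPolynomial.X j, by rw [map_mul, ← h, MvPolynomial.map_X]; ring⟩

lemma poly_app {σ C B : Type} [CommRing C] [CommRing B] (i : C →+* B) (f : C)
    (happ : ∀ t : B, ∃ (s : C) (t' : B), t = i s + i f * t') (t : MvPolynomial σ B) :
    ∃ (s : MvPolynomial σ C) (t' : MvPolynomial σ B),
      t = MvPolynomial.map i s + MvPolynomial.map i (MvPolynomial.C f) * t' := by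
  induction t using MvPolynomial.induction_on with
  | C b =>
    obtain ⟨m, s, h⟩ := happ b
    exact ⟨MvPolynomial.C m, MvPolynomial.C s, by simp [h]⟩
  | add p q hp hq =>
    obtain ⟨m, s, h⟩ := hp
    obtain ⟨m', s', h'⟩ := hq
    refine ⟨m + m', s + s', ?_⟩
    rw [map_add, h, h']; ring
  | mul_X p j hp =>
    obtain ⟨m, s, h⟩ := hp
    exact ⟨m * MvPolynomial.X j, s * MvPolynomial.X j, by
      rw [map_mul, MvPolynomial.map_X]; nth_rewrite 1 [h]; ring⟩

/-- The relation ideal of `A` over `B` is generated by the one over `C`. -/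
lemma ker_gen {σ C B A : Type} [Finite σ] [CommRing C] [CommRing B] [CommRing A]
    [IsNoetherianRing B] (i : C →+* B) (f : C)
    (happ : ∀ t : B, ∃ (s : C) (t' : B), t = i s + i f * t')
    (hden : ∀ t : B, ∃ (m : ℕ) (s : C), i f ^ m * t = i s)
    (φ : MvPolynomial σ B →+* A)
    (hφ : Function.Surjective (φ.comp (MvPolynomial.map i))) :
    RingHom.ker φ ≤ Ideal.map (MvPolynomial.map i) (RingHom.ker (φ.comp (MvPolynomial.map i))) := by
  set ι : MvPolynomial σ C →+* MvPolynomial σ B := MvPolynomial.map i with hι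
  set I := RingHom.ker (φ.comp ι)
  set F : MvPolynomial σ B := ι (MvPolynomial.C f)
  have hEle : Ideal.map ι I ≤ RingHom.ker φ := Ideal.map_le_iff_le_comap.2 fun x hx => hx
  have hsub : ∀ g : MvPolynomial σ B, ∃ s, g - ι s ∈ Ideal.map ι I ⊔ Ideal.span {F} * RingHom.ker φ := by
    intro g
    induction g using MvPolynomial.induction_on with
    | C b =>
      obtain ⟨h, hh⟩ := hφ (φ (MvPolynomial.C b))
      obtain ⟨c, b', hb⟩ := happ b
      obtain ⟨h', hh'⟩ := hφ (φ (MvPolynomial.C b'))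
      refine ⟨h, ?_⟩
      have e : (MvPolynomial.C b - ι h : MvPolynomial σ B) =
          ι (MvPolynomial.C c + MvPolynomial.C f * h' - h) + F * (MvPolynomial.C b' - ι h') := by
        simp only [F, hι, map_sub, map_add, map_mul, MvPolynomial.map_C, hb]; ring
      rw [e]
      have h2 : MvPolynomial.C b' - ι h' ∈ RingHom.ker φ := by
        rw [RingHom.mem_ker, map_sub, sub_eq_zero]; exact hh'.symm
      refine add_mem (Ideal.mem_sup_left (Ideal.mem_map_of_mem _ ?_)) (Ideal.mem_sup_right
        (Ideal.mul_mem_mul (Ideal.mem_span_singleton_self _) h2))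
      rw [RingHom.mem_ker, RingHom.comp_apply]
      have h3 : φ (MvPolynomial.C b - ι h) = 0 := by
        rw [map_sub, sub_eq_zero]; exact hh.symm
      rw [e, map_add, map_mul φ F, h2, mul_zero, add_zero] at h3
      exact h3
    | add p q hp hq =>
      obtain ⟨s, hs⟩ := hp
      obtain ⟨s', hs'⟩ := hq
      refine ⟨s + s', ?_⟩
      have := add_mem hs hs'
      rw [map_add]; convert this using 1; ring
    | mul_X p j hp =>
      obtain ⟨s, hs⟩ := hp
      refine ⟨s * MvPolynomial.X j, ?_⟩
      have := Ideal.mul_mem_right (MvPolynomial.X j) _ hs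
      rw [map_mul, hι, MvPolynomial.map_X]; convert this using 1; ring
  have h1 : RingHom.ker φ ≤ Ideal.map ι I ⊔ Ideal.span {F} * RingHom.ker φ := by
    intro g hg
    obtain ⟨s, hs⟩ := hsub g
    have hle : Ideal.map ι I ⊔ Ideal.span {F} * RingHom.ker φ ≤ RingHom.ker φ :=
      sup_le hEle Ideal.mul_le_right
    have h2 : s ∈ I := by
      have := sub_mem hg (hle hs)
      rw [sub_sub_cancel] at this
      exact this
    have := add_mem hs (Ideal.mem_sup_left (Ideal.mem_map_of_mem ι h2))
    simpa using this
  have hn : ∀ n : ℕ, ∀ g ∈ RingHom.ker φ, ∃ e ∈ Ideal.map ι I, ∃ g' ∈ RingHom.ker φ,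
      g = e + F ^ n * g' := by
    intro n
    induction n with
    | zero => intro g hg; exact ⟨0, zero_mem _, g, hg, by simp⟩
    | succ n ih =>
      intro g hg
      obtain ⟨e, he, g', hg', rfl⟩ := ih g hg
      obtain ⟨e', he', y, hy, rfl⟩ := Submodule.mem_sup.1 (h1 hg')
      obtain ⟨z, hz, rfl⟩ := Ideal.mem_span_singleton_mul.1 hy
      exact ⟨e + F ^ n * e', add_mem he (Ideal.mul_mem_left _ _ he'), z, hz, by ring⟩
  obtain ⟨N, hN⟩ := hfg_bdd F (RingHom.ker φ) (Ideal.map ι I) (IsNoetherian.noetherian _) (by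
    intro g hg
    obtain ⟨m, s, hs⟩ := poly_den i f hden g
    refine ⟨m, ?_⟩
    rw [smul_eq_mul, hs]
    apply Ideal.mem_map_of_mem
    have : φ (F ^ m * g) = 0 := by rw [map_mul, hg, mul_zero]
    rw [hs] at this
    exact this)
  intro g hg
  obtain ⟨e, he, g', hg', rfl⟩ := hn N g hg
  exact add_mem he (hN g' hg')

/-- The key matrix relation. -/
lemma key_rel {σ C B A : Type} [Finite σ] [CommRing C] [CommRing B] [CommRing A]
    [IsNoetherianRing B] [IsNoetherianRing C] [Algebra C B] [Algebra B A]
    (f : C) (hi : Function.Injective (algebraMap C B))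
    (happ : ∀ t : B, ∃ (s : C) (t' : B), t = algebraMap C B s + algebraMap C B f * t')
    (hden : ∀ t : B, ∃ (m : ℕ) (s : C), algebraMap C B f ^ m * t = algebraMap C B s)
    (φ : MvPolynomial σ B →ₐ[B] A)
    (hφ : Function.Surjective (φ.toRingHom.comp (MvPolynomial.map (algebraMap C B))))
    (R : A →ₗ[B] B) (hR : R 1 = 1) (r : ℕ) :
    ∃ N : ℕ, ∀ (n : ℕ) (α : Fin r → C) (β : Fin r → B)
      (_ : ∀ j, algebraMap C B (α j) = algebraMap C B f ^ n * β j)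
      (_ : ∀ (x : C) (y : B), algebraMap C B x = algebraMap C B f ^ n * y →
        ∃ (u : C) (v : Fin r → C), x = f ^ n * u + ∑ j, v j * α j),
      ∀ j, ∃ (m : Fin r → C) (u : C), (∀ l, ∃ t, algebraMap C B (m l) = algebraMap C B f ^ n * t) ∧
        f ^ N * α j = f ^ n * u + ∑ l, m l * α l := by
  classical
  set i := algebraMap C B with hi_def
  set ι : MvPolynomial σ C →+* MvPolynomial σ B := MvPolynomial.map i with hι
  set I := RingHom.ker (φ.toRingHom.comp ι) with hI
  have hker := ker_gen i f happ hden φ.toRingHom hφ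
  obtain ⟨s, p, hp⟩ := Submodule.fg_iff_exists_fin_generating_family.1
    (IsNoetherian.noetherian I)
  change Ideal.span (Set.range p) = I at hp
  have hιinj : Function.Injective ι := MvPolynomial.map_injective i hi
  obtain ⟨N, hN⟩ := rel_lift ι hιinj (MvPolynomial.C f) (poly_app i f happ) (poly_den i f hden) p
  rw [hp] at hN
  refine ⟨N, fun n α β hαβ hJ j => ?_⟩
  -- a lift of `β j`
  obtain ⟨h, hh⟩ := hφ (φ.toRingHom (MvPolynomial.C (β j)))
  have hy : MvPolynomial.C (β j) - ι h ∈ RingHom.ker φ.toRingHom := by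
    rw [RingHom.mem_ker, map_sub, sub_eq_zero]; exact hh.symm
  have hxy : ι (MvPolynomial.C (α j) - MvPolynomial.C f ^ n * h) =
      ι (MvPolynomial.C f) ^ n * (MvPolynomial.C (β j) - ι h) := by
    simp only [hι, map_sub, map_mul, map_pow, MvPolynomial.map_C, hαβ]; ring
  have hx : MvPolynomial.C (α j) - MvPolynomial.C f ^ n * h ∈ I := by
    rw [hI, RingHom.mem_ker, RingHom.comp_apply, hxy, map_mul, hy, mul_zero]
  obtain ⟨e, he, het⟩ := hN n _ _ hx (hker hy) hxy
  -- decompose the coefficients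
  have hdec : ∀ k, ∃ (u : MvPolynomial σ C) (v : Fin r → MvPolynomial σ C),
      e k = MvPolynomial.C f ^ n * u + ∑ l, v l * MvPolynomial.C (α l) := by
    intro k
    let K : Ideal C := Ideal.span {f ^ n} ⊔ Ideal.span (Set.range α)
    have h1 : e k ∈ Ideal.map MvPolynomial.C K := by
      rw [MvPolynomial.mem_map_C_iff]
      intro m
      obtain ⟨t, ht⟩ := het k
      have h2 : i (MvPolynomial.coeff m (e k)) = i f ^ n * MvPolynomial.coeff m t := by
        have := congrArg (MvPolynomial.coeff m) ht
        rw [hι, MvPolynomial.coeff_map, MvPolynomial.map_C, ← map_pow, MvPolynomial.coeff_C_mul] at this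
        exact this
      obtain ⟨u, v, huv⟩ := hJ _ _ h2
      rw [huv]
      exact add_mem (Ideal.mem_sup_left (Ideal.mem_span_singleton.2 (dvd_mul_right _ _)))
        (Ideal.mem_sup_right (Ideal.mem_span_range_iff_exists_fun.2 ⟨v, rfl⟩))
    rw [Ideal.map_sup, Ideal.map_span, Ideal.map_span, Set.image_singleton, ← Set.range_comp] at h1
    obtain ⟨a, ha, b, hb, hab⟩ := Submodule.mem_sup.1 h1
    obtain ⟨u, hu⟩ := Ideal.mem_span_singleton.1 ha
    obtain ⟨v, hv⟩ := Ideal.mem_span_range_iff_exists_fun.1 hb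
    refine ⟨u, v, ?_⟩
    rw [← hab, hu, ← hv, map_pow]; rfl
  choose u v huv using hdec
  -- the approximate retraction
  choose c t hct using fun μ : σ →₀ ℕ =>
    happ_pow i f happ n (R (φ (MvPolynomial.monomial μ 1)))
  let ψ : MvPolynomial σ C →ₗ[C] C := (MvPolynomial.basisMonomials σ C).constr C c
  have hψm : ∀ μ, ψ (MvPolynomial.monomial μ 1) = c μ := fun μ => by
    have := (MvPolynomial.basisMonomials σ C).constr_basis C c μ
    simpa using this
  have hψ : ∀ w : MvPolynomial σ C, ∃ b, R (φ (ι w)) = i (ψ w) + i f ^ n * b := by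
    intro w
    induction w using MvPolynomial.induction_on' with
    | monomial μ a =>
      have e1 : (MvPolynomial.monomial μ a : MvPolynomial σ C) = a • MvPolynomial.monomial μ 1 := by
        rw [MvPolynomial.smul_monomial, smul_eq_mul, mul_one]
      have e2 : ι (MvPolynomial.monomial μ a) = i a • MvPolynomial.monomial μ 1 := by
        rw [MvPolynomial.smul_monomial, smul_eq_mul, mul_one, hι, MvPolynomial.map_monomial]
      refine ⟨i a * t μ, ?_⟩
      rw [e2, e1, map_smul, map_smul, map_smul, hψm, hct]
      simp; ring
    | add p q hp hq =>
      obtain ⟨b, hb⟩ := hp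
      obtain ⟨b', hb'⟩ := hq
      exact ⟨b + b', by rw [map_add, map_add, map_add, hb, hb', map_add, map_add]; ring⟩
  have hψI : ∀ w ∈ I, ∃ b, i (ψ w) = i f ^ n * b := by
    intro w hw
    obtain ⟨b, hb⟩ := hψ w
    have : φ (ι w) = 0 := hw
    rw [this, map_zero] at hb
    exact ⟨-b, by linear_combination -hb⟩
  obtain ⟨b1, hb1⟩ := hψ 1
  rw [map_one, map_one, hR] at hb1
  have hpI : ∀ k, p k ∈ I := fun k => hp ▸ Ideal.subset_span ⟨k, rfl⟩
  have hw : ∀ l, ∑ k, v k l * p k ∈ I := fun l =>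
    Ideal.sum_mem _ fun k _ => Ideal.mul_mem_left _ _ (hpI k)
  -- the polynomial identity
  have hmain : (f ^ N * α j) • (1 : MvPolynomial σ C) =
      f ^ n • (MvPolynomial.C f ^ N * h + ∑ k, u k * p k) + ∑ l, α l • (∑ k, v k l * p k) := by
    have h3 : ∑ k, e k * p k = MvPolynomial.C f ^ n * ∑ k, u k * p k +
        ∑ l, MvPolynomial.C (α l) * (∑ k, v k l * p k) := by
      simp only [huv, add_mul, Finset.sum_add_distrib, Finset.mul_sum, Finset.sum_mul]
      rw [Finset.sum_comm (s := Finset.univ (α := Fin r))]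
      congr 1
      · exact Finset.sum_congr rfl fun k _ => by ring
      · exact Finset.sum_congr rfl fun k _ => Finset.sum_congr rfl fun l _ => by ring
    rw [h3] at he
    simp only [MvPolynomial.smul_eq_C_mul, map_mul, map_pow]
    linear_combination he
  have h4 := congrArg ψ hmain
  simp only [map_smul, map_add, map_sum, smul_eq_mul] at h4
  refine ⟨fun l => ψ (∑ k, v k l * p k) + if l = j then f ^ N * (1 - ψ 1) else 0,
    ψ (MvPolynomial.C f ^ N * h) + ∑ k, ψ (u k * p k), fun l => ?_, ?_⟩
  · obtain ⟨b, hb⟩ := hψI _ (hw l)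
    by_cases hl : l = j
    · refine ⟨b + i f ^ N * b1, ?_⟩
      simp only [hl, if_true, map_add, map_mul, map_sub, map_one, map_pow]
      rw [hl] at hb
      rw [hb]
      linear_combination i f ^ N * hb1
    · exact ⟨b, by simp only [hl, if_false, add_zero]; exact hb⟩
  · simp only [add_mul, Finset.sum_add_distrib, ite_mul, zero_mul, Finset.sum_ite_eq',
      Finset.mem_univ, if_true, map_sum]
    have h5 : ∑ l, α l * ∑ k, ψ (v k l * p k) = ∑ l, (∑ k, ψ (v k l * p k)) * α l :=
      Finset.sum_congr rfl fun l _ => mul_comm _ _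
    rw [h5] at h4
    linear_combination h4

lemma local_fin {σ C B A : Type} [Finite σ] [CommRing C] [CommRing B] [CommRing A] [IsDomain B]
    [IsNoetherianRing B] [IsNoetherianRing C] [Algebra C B] [Algebra B A]
    (f : C) (hi : Function.Injective (algebraMap C B)) (hf : f ≠ 0)
    (happ : ∀ t : B, ∃ (s : C) (t' : B), t = algebraMap C B s + algebraMap C B f * t')
    (hden : ∀ t : B, ∃ (m : ℕ) (s : C), algebraMap C B f ^ m * t = algebraMap C B s)
    (φ : MvPolynomial σ B →ₐ[B] A)
    (hφ : Function.Surjective (φ.toRingHom.comp (MvPolynomial.map (algebraMap C B))))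
    (R : A →ₗ[B] B) (hR : R 1 = 1) :
    ∃ w : B, ∀ b, b ∈ Algebra.adjoin C {w} := by
  classical
  have hf0 : algebraMap C B f ≠ 0 := fun h => hf (hi (by rw [h, map_zero]))
  let J : Ideal C := (Ideal.span {algebraMap C B f}).comap (algebraMap C B)
  obtain ⟨r, γ, hγ⟩ := Submodule.fg_iff_exists_fin_generating_family.1
    (IsNoetherian.noetherian J)
  change Ideal.span (Set.range γ) = J at hγ
  obtain ⟨N, hN⟩ := key_rel f hi happ hden φ hφ R hR r
  set i := algebraMap C B with hi_def
  set M := N * r with hM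
  set n := 2 * M + 1 with hn
  -- generators of `J` modulo `f` which are highly divisible in `B`
  have hγ' : ∀ j, ∃ (a : C) (β : B) (c : C), γ j = a + f * c ∧ i a = i f ^ n * β := by
    intro j
    have h1 : γ j ∈ J := hγ ▸ Ideal.subset_span ⟨j, rfl⟩
    obtain ⟨b, hb⟩ := Ideal.mem_span_singleton.1 h1
    obtain ⟨c, b', hb'⟩ := happ_pow i f happ (2 * M) b
    refine ⟨γ j - f * c, b', c, by ring, ?_⟩
    rw [map_sub, hb, map_mul, hb', hn]; ring
  choose α β c hγα hαβ using hγ'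
  have hJ1 : ∀ (x : C) (y : B), i x = i f * y →
      ∃ (u : C) (v : Fin r → C), x = f * u + ∑ j, v j * α j := by
    intro x y hxy
    have h1 : x ∈ J := Ideal.mem_span_singleton.2 ⟨y, hxy⟩
    rw [← hγ] at h1
    obtain ⟨v, hv⟩ := Ideal.mem_span_range_iff_exists_fun.1 h1
    refine ⟨∑ j, v j * c j, v, ?_⟩
    rw [← hv, Finset.mul_sum, ← Finset.sum_add_distrib]
    exact Finset.sum_congr rfl fun j _ => by rw [hγα]; ring
  have hJm : ∀ m ≤ n, ∀ (x : C) (y : B), i x = i f ^ m * y →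
      ∃ (u : C) (v : Fin r → C), x = f ^ m * u + ∑ j, v j * α j := by
    intro m
    induction m with
    | zero => intro _ x y _; exact ⟨x, 0, by simp⟩
    | succ m ih =>
      intro hm x y hxy
      obtain ⟨u, v, huv⟩ := hJ1 x (i f ^ m * y) (by rw [hxy]; ring)
      obtain ⟨d, hd⟩ := Nat.exists_eq_add_of_le hm
      have h2 : i u = i f ^ m * (y - ∑ j, i (v j) * (i f ^ d * β j)) := by
        apply mul_left_cancel₀ hf0
        have h3 := congrArg i huv
        rw [hxy, map_add, map_mul, map_sum] at h3
        have h4 : ∑ j, i (v j * α j) = i f ^ (m + 1) * ∑ j, i (v j) * (i f ^ d * β j) := by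
          rw [Finset.mul_sum]
          refine Finset.sum_congr rfl fun j _ => ?_
          rw [map_mul, hαβ, hd]; ring
        rw [h4] at h3
        linear_combination -h3
      obtain ⟨u', v', h'⟩ := ih (by omega) u _ h2
      refine ⟨u', v + fun j => f * v' j, ?_⟩
      rw [huv, h']
      simp only [Pi.add_apply, add_mul, Finset.sum_add_distrib, mul_add, Finset.mul_sum, mul_assoc]
      ring
  choose m u hm hu using hN n α β hαβ (hJm n le_rfl)
  -- the determinant
  let X : Matrix (Fin r) (Fin r) C := f ^ N • (1 : Matrix (Fin r) (Fin r) C) - Matrix.of m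
  have hX : X.mulVec α = f ^ n • u := by
    ext j
    have h1 := hu j
    have h2 : (Matrix.of m).mulVec α j = ∑ l, m j l * α l := rfl
    simp only [X, Matrix.sub_mulVec, Matrix.smul_mulVec, Matrix.one_mulVec, Pi.sub_apply,
      Pi.smul_apply, smul_eq_mul]
    rw [h1, h2]; ring
  have hdet : ∀ j, X.det * α j = f ^ n * (X.adjugate.mulVec u) j := by
    intro j
    have h1 : X.adjugate.mulVec (X.mulVec α) = X.det • α := by
      rw [Matrix.mulVec_mulVec, Matrix.adjugate_mul, Matrix.smul_mulVec, Matrix.one_mulVec]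
    rw [hX, Matrix.mulVec_smul] at h1
    have := congrFun h1 j
    simpa using this.symm
  let Jn : Ideal C := (Ideal.span {i f ^ n}).comap i
  have hmJ : ∀ j l, m j l ∈ Jn := fun j l => by
    obtain ⟨t, ht⟩ := hm j l
    exact Ideal.mem_span_singleton.2 ⟨t, ht⟩
  have hdetJ : f ^ M - X.det ∈ Jn := by
    rw [← Ideal.Quotient.eq, RingHom.map_det]
    have : (Ideal.Quotient.mk Jn).mapMatrix X =
        (Ideal.Quotient.mk Jn (f ^ N)) • (1 : Matrix (Fin r) (Fin r) (C ⧸ Jn)) := by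
      ext j l
      have h0 := Ideal.Quotient.eq_zero_iff_mem.2 (hmJ j l)
      by_cases h : j = l
      · subst h; simp [X, h0]
      · simp [X, h0, h]
    rw [this, Matrix.det_smul, Matrix.det_one, mul_one, Fintype.card_fin, ← map_pow, hM, pow_mul]
  obtain ⟨b0, hb0⟩ := Ideal.mem_span_singleton.1 hdetJ
  obtain ⟨u0, v0, huv0⟩ := hJm n le_rfl _ _ hb0
  set w : B := i f ^ M * b0 with hw
  set z : B := i f * w with hz
  have hDz : i X.det = i f ^ M * (1 - z) := by
    have : i X.det = i f ^ M - i (f ^ M - X.det) := by rw [map_sub, map_pow]; ring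
    rw [this, hb0, hz, hw, hn]; ring
  have hzα : ∀ j, (1 - z) * i (α j) = i f * i (f ^ M * (X.adjugate.mulVec u) j) := by
    intro j
    apply mul_left_cancel₀ (pow_ne_zero M hf0)
    have := congrArg i (hdet j)
    rw [map_mul, hDz, map_mul, map_pow, hn] at this
    rw [map_mul, map_pow]
    linear_combination this
  have hzz : ∃ x : C, (1 - z) * z = i f * i x := by
    refine ⟨X.det * u0 + ∑ j, v0 j * (X.adjugate.mulVec u) j, ?_⟩
    apply mul_left_cancel₀ (pow_ne_zero (2 * M) hf0)
    have h1 : X.det * (f ^ M - X.det) =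
        f ^ n * (X.det * u0 + ∑ j, v0 j * (X.adjugate.mulVec u) j) := by
      rw [huv0, mul_add, mul_add, Finset.mul_sum, Finset.mul_sum]
      congr 1
      · ring
      · refine Finset.sum_congr rfl fun j _ => ?_
        linear_combination v0 j * hdet j
    have h2 := congrArg i h1
    rw [map_mul, hb0, hDz, map_mul i (f ^ n), map_pow] at h2
    rw [hz, hw]
    rw [hn] at h2
    rw [hz, hw] at h2
    linear_combination h2
  obtain ⟨xz, hxz⟩ := hzz
  refine ⟨w, ?_⟩
  let D := Algebra.adjoin C {w}
  have hwD : w ∈ D := Algebra.subset_adjoin rfl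
  have hiD : ∀ x, i x ∈ D := fun x => D.algebraMap_mem x
  have hzD : z ∈ D := D.mul_mem (hiD f) hwD
  let D' := Algebra.adjoin C {z}
  have hzD' : z ∈ D' := Algebra.subset_adjoin rfl
  have hiD' : ∀ x, i x ∈ D' := fun x => D'.algebraMap_mem x
  have hD'D : D' ≤ D := Algebra.adjoin_le (by simpa using hzD)
  have hD'0 : ∀ x ∈ D', ∃ (a : C) (y : B), y ∈ D' ∧ x = i a + z * y := by
    intro x hx
    induction hx using Algebra.adjoin_induction with
    | mem x hx => rw [Set.mem_singleton_iff.1 hx]; exact ⟨0, 1, one_mem _, by simp⟩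
    | algebraMap c => exact ⟨c, 0, zero_mem _, by simp [hi_def]⟩
    | add x x1 _ _ hx hx1 =>
      obtain ⟨a, y, hy, rfl⟩ := hx
      obtain ⟨a', y', hy', rfl⟩ := hx1
      exact ⟨a + a', y + y', add_mem hy hy', by rw [map_add]; ring⟩
    | mul x x1 _ _ hx hx1 =>
      obtain ⟨a, y, hy, rfl⟩ := hx
      obtain ⟨a', y', hy', rfl⟩ := hx1
      exact ⟨a * a', i a * y' + y * (i a' + z * y'), add_mem (mul_mem (hiD' _) hy')
        (mul_mem hy (add_mem (hiD' _) (mul_mem hzD' hy'))), by rw [map_mul]; ring⟩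
  have hstep : ∀ x ∈ D', ∀ y, x = i f * y → ∃ x' ∈ D', (1 - z) * x = i f * x' := by
    intro x hx y hxy
    obtain ⟨a, y', hy', h⟩ := hD'0 x hx
    have h1 : i a = i f * (y - w * y') := by
      rw [hz] at h; linear_combination hxy - h
    obtain ⟨u1, v1, h2⟩ := hJ1 _ _ h1
    refine ⟨(1 - z) * i u1 + ∑ j, i (v1 j) * i (f ^ M * (X.adjugate.mulVec u) j) + i xz * y', ?_, ?_⟩
    · refine add_mem (add_mem (mul_mem (sub_mem (one_mem _) hzD') (hiD' _))
        (sum_mem fun j _ => mul_mem (hiD' _) (hiD' _))) (mul_mem (hiD' _) hy')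
    · have h3 : (1 - z) * ∑ j, i (v1 j) * i (α j) =
          i f * ∑ j, i (v1 j) * i (f ^ M * (X.adjugate.mulVec u) j) := by
        rw [Finset.mul_sum, Finset.mul_sum]
        refine Finset.sum_congr rfl fun j _ => ?_
        linear_combination i (v1 j) * hzα j
      rw [h, h2]
      simp only [map_add, map_mul i f u1, map_sum, map_mul i (v1 _) (α _)]
      linear_combination h3 + y' * hxz
  have hpow : ∀ (k : ℕ) (b : B), i f ^ k * b ∈ D' → (1 - z) ^ k * b ∈ D' := by
    intro k
    induction k with
    | zero => intro b hb; simpa using hb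
    | succ k ih =>
      intro b hb
      obtain ⟨x', hx', h⟩ := hstep _ hb (i f ^ k * b) (by ring)
      have h1 : x' = i f ^ k * ((1 - z) * b) := by
        apply mul_left_cancel₀ hf0
        rw [← h]; ring
      rw [h1] at hx'
      have := ih _ hx'
      rw [pow_succ, mul_assoc]; exact this
  intro b
  obtain ⟨k, s, hs⟩ := hden b
  have hb1 : i f ^ k * b ∈ D := by rw [hs]; exact hiD s
  have hb2 : (1 - z) ^ k * b ∈ D := hD'D (hpow k b (by rw [hs]; exact hiD' s))
  let F : D := ⟨i f, hiD f⟩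
  let Z : D := ⟨1 - z, sub_mem (one_mem _) hzD⟩
  have hcop : IsCoprime F Z := ⟨⟨w, hwD⟩, 1, Subtype.ext (by simp [F, Z, hz]; ring)⟩
  obtain ⟨p, q, hpq⟩ := (hcop.pow (m := k) (n := k))
  have h1 := congrArg (Subtype.val) hpq
  simp only [F, Z, Subalgebra.coe_add, Subalgebra.coe_mul, Subalgebra.coe_pow, Subalgebra.coe_one] at h1
  have h2 : b = p * (i f ^ k * b) + q * ((1 - z) ^ k * b) := by
    linear_combination (-b) * h1
  rw [h2]
  exact add_mem (mul_mem p.2 hb1) (mul_mem q.2 hb2)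

open TensorProduct in
lemma exists_alg_field {B A : Type} [CommRing B] [CommRing A] [IsDomain B] [Algebra B A]
    [Algebra.FiniteType B A] (R : A →ₗ[B] B) (hR : R 1 = 1) :
    ∃ (L : Type) (_ : Field L) (_ : Algebra B L) (_ : A →ₐ[B] L),
      Algebra.IsAlgebraic B L ∧ Function.Injective (algebraMap B L) := by
  let K := FractionRing B
  have hnt : Nontrivial (K ⊗[B] A) := by
    refine ⟨⟨1, 0, fun h => ?_⟩⟩
    have h1 := congrArg (R.lTensor K) h
    have h2 := congrArg (TensorProduct.rid B K) h1
    rw [Algebra.TensorProduct.one_def] at h2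
    simp [hR] at h2
  obtain ⟨M, hM⟩ := Ideal.exists_maximal (K ⊗[B] A)
  letI : Field ((K ⊗[B] A) ⧸ M) := Ideal.Quotient.field M
  have hft : Algebra.FiniteType K ((K ⊗[B] A) ⧸ M) := inferInstance
  have hfin : Module.Finite K ((K ⊗[B] A) ⧸ M) := finite_of_finite_type_of_isJacobsonRing _ _
  refine ⟨(K ⊗[B] A) ⧸ M, inferInstance, inferInstance,
    ((Ideal.Quotient.mkₐ B M).comp Algebra.TensorProduct.includeRight), ?_, ?_⟩
  · have halg : Algebra.IsAlgebraic K ((K ⊗[B] A) ⧸ M) := Algebra.IsAlgebraic.of_finite K _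
    exact (IsFractionRing.comap_isAlgebraic_iff (K := K)).2 halg
  · rw [IsScalarTower.algebraMap_eq B K]
    exact (algebraMap K _).injective.comp (IsFractionRing.injective B K)

lemma integral_descend {k B L : Type} [Field k] [CommRing B] [CommRing L] [Algebra k B]
    [Algebra B L] (C : Subalgebra k B) (x : L) (p : Polynomial B) (hp : p.Monic)
    (hx : Polynomial.eval₂ (algebraMap B L) x p = 0) (hC : ∀ n, p.coeff n ∈ C) :
    IsIntegral C x := by
  have h1 : p ∈ Polynomial.lifts (algebraMap C B) := by
    rw [Polynomial.lifts_iff_coeff_lifts]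
    intro n
    exact ⟨⟨_, hC n⟩, rfl⟩
  obtain ⟨q, hq, _, hqm⟩ := Polynomial.lifts_and_natDegree_eq_and_monic h1 hp
  refine ⟨q, hqm, ?_⟩
  rw [← hq, Polynomial.eval₂_map] at hx
  exact hx

lemma generic_fin {k B A : Type} [Field k] [CommRing B] [CommRing A] [IsDomain B] [Algebra k B]
    [Algebra k A] [Algebra B A] [IsScalarTower k B A] [hA : Algebra.FiniteType k A]
    (R : A →ₗ[B] B) (hR : R 1 = 1) :
    ∃ (t : Finset B) (g : B), g ∈ Algebra.adjoin k (t : Set B) ∧ g ≠ 0 ∧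
      ∀ b, ∃ m : ℕ, g ^ m * b ∈ Algebra.adjoin k (t : Set B) := by
  classical
  have : Algebra.FiniteType B A := Algebra.FiniteType.of_restrictScalars_finiteType k B A
  obtain ⟨L, _, _, ψ, halg, hinj⟩ := exists_alg_field R hR
  obtain ⟨S, hS⟩ := hA.out
  obtain ⟨g, hg0, hg⟩ := Algebra.IsAlgebraic.exists_integral_multiples B (S.image ψ)
  choose! p hp hpx using hg
  let t : Finset B := insert g ((S.image ψ).biUnion fun x => (p x).coeffs)
  let C : Subalgebra k B := Algebra.adjoin k (t : Set B)
  have hgC : g ∈ C := Algebra.subset_adjoin (by simp [t])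
  have hintegral : ∀ x ∈ S.image ψ, IsIntegral C (g • x) := by
    intro x hx
    refine integral_descend C _ (p x) (hp x hx) (hpx x hx) fun n => ?_
    by_cases hn : (p x).coeff n = 0
    · rw [hn]; exact zero_mem _
    · apply Algebra.subset_adjoin
      refine Finset.mem_coe.2 (Finset.mem_insert_of_mem (Finset.mem_biUnion.2 ⟨x, hx, ?_⟩))
      exact Polynomial.coeff_mem_coeffs hn
  have hCft : Algebra.FiniteType k C := (Subalgebra.fg_iff_finiteType _).1 ⟨t, rfl⟩
  have hCN : IsNoetherianRing C := Algebra.FiniteType.isNoetherianRing k C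
  let U : Finset L := (S.image ψ).image (g • ·)
  let T : Subalgebra C L := Algebra.adjoin C (U : Set L)
  have hTfg : (Subalgebra.toSubmodule T).FG := fg_adjoin_of_finite U.finite_toSet (by
    intro x hx
    obtain ⟨y, hy, rfl⟩ := Finset.mem_image.1 (Finset.mem_coe.1 hx)
    exact hintegral y hy)
  let j : B →ₐ[C] L := IsScalarTower.toAlgHom C B L
  let C2 : Subalgebra C B := T.comap j
  have hC2 : (Subalgebra.toSubmodule C2).FG := by
    apply Submodule.fg_of_fg_map_injective j.toLinearMap hinj
    refine Submodule.FG.of_le hTfg ?_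
    rintro _ ⟨x, hx, rfl⟩
    exact hx
  obtain ⟨s, hs⟩ := Subalgebra.fg_of_fg_toSubmodule hC2
  have hgT : algebraMap B L g ∈ T := T.algebraMap_mem (⟨g, hgC⟩ : C)
  have hgTm : ∀ m : ℕ, algebraMap B L g ^ m ∈ T := fun m => pow_mem hgT m
  have hden : ∀ a : A, ∃ m : ℕ, algebraMap B L g ^ m * ψ a ∈ T := by
    intro a
    have ha : a ∈ Algebra.adjoin k (S : Set A) := by rw [hS]; trivial
    induction ha using Algebra.adjoin_induction with
    | mem x hx =>
      refine ⟨1, Algebra.subset_adjoin ?_⟩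
      rw [pow_one, ← Algebra.smul_def]
      exact Finset.mem_coe.2 (Finset.mem_image_of_mem _ (Finset.mem_image_of_mem _ hx))
    | algebraMap c =>
      refine ⟨0, ?_⟩
      rw [pow_zero, one_mul, IsScalarTower.algebraMap_apply k B A, AlgHom.commutes]
      exact T.algebraMap_mem (algebraMap k C c)
    | add x y _ _ hx hy =>
      obtain ⟨m, hm⟩ := hx
      obtain ⟨m', hm'⟩ := hy
      refine ⟨m + m', ?_⟩
      have := add_mem (mul_mem (hgTm m') hm) (mul_mem (hgTm m) hm')
      rw [map_add]; convert this using 1; ring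
    | mul x y _ _ hx hy =>
      obtain ⟨m, hm⟩ := hx
      obtain ⟨m', hm'⟩ := hy
      refine ⟨m + m', ?_⟩
      have := mul_mem hm hm'
      rw [map_mul]; convert this using 1; ring
  have hunion : ∀ b, b ∈ C2 → b ∈ Algebra.adjoin k ((t ∪ s : Finset B) : Set B) := by
    intro b hb
    rw [Finset.coe_union, Algebra.adjoin_union_eq_adjoin_adjoin, Subalgebra.mem_restrictScalars]
    rw [← hs] at hb
    exact hb
  refine ⟨t ∪ s, g, Algebra.adjoin_mono (by simp) hgC, hg0, fun b => ?_⟩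
  obtain ⟨m, hm⟩ := hden (algebraMap B A b)
  refine ⟨m, hunion _ ?_⟩
  change j (g ^ m * b) ∈ T
  rw [AlgHom.commutes, ← map_pow, ← map_mul] at hm
  exact hm

lemma step_fin {k B A : Type} [Field k] [CommRing B] [CommRing A] [Algebra k B]
    [Algebra k A] [Algebra B A] [IsScalarTower k B A] [hA : Algebra.FiniteType k A]
    [IsNoetherianRing B] (R : A →ₗ[B] B) (hR : R 1 = 1)
    (hq : ∀ J : Ideal B, J ≠ ⊥ → ∃ t : Finset B, ∀ b, ∃ c ∈ Algebra.adjoin k (t : Set B), b - c ∈ J) :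
    ∃ t : Finset B, ∀ b, b ∈ Algebra.adjoin k (t : Set B) := by
  classical
  cases subsingleton_or_nontrivial B with
  | inl h => exact ⟨∅, fun b => by rw [Subsingleton.elim b 0]; exact zero_mem _⟩
  | inr hnt =>
  by_cases hdom : NoZeroDivisors B
  · have : IsDomain B := NoZeroDivisors.to_isDomain B
    obtain ⟨t0, g, hg, hg0, hgm⟩ := generic_fin (k := k) R hR
    obtain ⟨t1, ht1⟩ := hq (Ideal.span {g}) (by simpa using hg0)
    let t := t0 ∪ t1
    let C : Subalgebra k B := Algebra.adjoin k (t : Set B)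
    have h0 : Algebra.adjoin k (t0 : Set B) ≤ C := Algebra.adjoin_mono (by simp [t])
    have h1 : Algebra.adjoin k (t1 : Set B) ≤ C := Algebra.adjoin_mono (by simp [t])
    have hCft : Algebra.FiniteType k C := (Subalgebra.fg_iff_finiteType _).1 ⟨t, rfl⟩
    have hCN : IsNoetherianRing C := Algebra.FiniteType.isNoetherianRing k C
    obtain ⟨S, hS⟩ := hA.out
    let φ : MvPolynomial S B →ₐ[B] A := MvPolynomial.aeval (fun x => (x : A))
    obtain ⟨w, hw⟩ := local_fin (C := C) (B := B) (A := A) ⟨g, h0 hg⟩ Subtype.val_injective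
      (fun h => hg0 (congrArg Subtype.val h))
      (by
        intro b
        obtain ⟨c, hc, hbc⟩ := ht1 b
        obtain ⟨d, hd⟩ := Ideal.mem_span_singleton.1 hbc
        exact ⟨⟨c, h1 hc⟩, d, by change b = c + g * d; linear_combination hd⟩)
      (by
        intro b
        obtain ⟨m, hm⟩ := hgm b
        exact ⟨m, ⟨_, h0 hm⟩, rfl⟩) φ
      (by
        intro a
        have ha : a ∈ Algebra.adjoin k (S : Set A) := by rw [hS]; trivial
        induction ha using Algebra.adjoin_induction with
        | mem x hx => exact ⟨MvPolynomial.X ⟨x, hx⟩, by simp [φ]⟩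
        | algebraMap c =>
          refine ⟨MvPolynomial.C (algebraMap k C c), ?_⟩
          rw [IsScalarTower.algebraMap_apply k B A]
          simp only [RingHom.comp_apply, MvPolynomial.map_C]
          exact φ.commutes _
        | add x y _ _ hx hy =>
          obtain ⟨p, rfl⟩ := hx
          obtain ⟨q, rfl⟩ := hy
          exact ⟨p + q, map_add _ _ _⟩
        | mul x y _ _ hx hy =>
          obtain ⟨p, rfl⟩ := hx
          obtain ⟨q, rfl⟩ := hy
          exact ⟨p * q, map_mul _ _ _⟩) R hR
    refine ⟨t ∪ {w}, fun b => ?_⟩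
    rw [Finset.coe_union, Algebra.adjoin_union_eq_adjoin_adjoin, Subalgebra.mem_restrictScalars,
      Finset.coe_singleton]
    exact hw b
  · have : ∃ x y : B, x * y = 0 ∧ x ≠ 0 ∧ y ≠ 0 := by
      by_contra hcon
      push Not at hcon
      refine hdom ⟨fun {x y} h => ?_⟩
      by_cases hx : x = 0
      · exact Or.inl hx
      · exact Or.inr (hcon x y h hx)
    obtain ⟨x, y, hxy, hx, hy⟩ := this
    obtain ⟨t1, h1⟩ := hq (Ideal.span {x}) (by simpa using hx)
    obtain ⟨t2, h2⟩ := hq (Ideal.span {y}) (by simpa using hy)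
    refine ⟨insert x (t1 ∪ t2), fun b => ?_⟩
    have l1 : Algebra.adjoin k (t1 : Set B) ≤
        Algebra.adjoin k ((insert x (t1 ∪ t2) : Finset B) : Set B) :=
      Algebra.adjoin_mono (Finset.coe_subset.2 fun z hz => by simp [hz])
    have l2 : Algebra.adjoin k (t2 : Set B) ≤
        Algebra.adjoin k ((insert x (t1 ∪ t2) : Finset B) : Set B) :=
      Algebra.adjoin_mono (Finset.coe_subset.2 fun z hz => by simp [hz])
    have lx : x ∈ Algebra.adjoin k ((insert x (t1 ∪ t2) : Finset B) : Set B) :=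
      Algebra.subset_adjoin (by simp)
    obtain ⟨c, hc, hbc⟩ := h1 b
    obtain ⟨d, hd⟩ := Ideal.mem_span_singleton.1 hbc
    obtain ⟨c', hc', hbc'⟩ := h2 d
    obtain ⟨d', hd'⟩ := Ideal.mem_span_singleton.1 hbc'
    have : b = c + x * c' := by
      linear_combination hd + x * hd' + d' * hxy
    rw [this]
    exact add_mem (l1 hc) (mul_mem lx (l2 hc'))

lemma retract_mem {B A : Type} [CommRing B] [CommRing A] [Algebra B A]
    (R : A →ₗ[B] B) (I : Ideal B) (a : A) (ha : a ∈ I.map (algebraMap B A)) : R a ∈ I := by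
  induction ha using Submodule.span_induction with
  | mem x hx =>
    obtain ⟨b, hb, rfl⟩ := hx
    rw [Algebra.algebraMap_eq_smul_one, map_smul, smul_eq_mul]
    exact I.mul_mem_right _ hb
  | zero => simp
  | add x y _ _ hx hy => rw [map_add]; exact add_mem hx hy
  | smul c x hx' hx =>
    have : ∀ c : A, R (c * x) ∈ I := by
      clear hx
      intro c
      induction hx' using Submodule.span_induction generalizing c with
      | mem x hx =>
        obtain ⟨b, hb, rfl⟩ := hx
        rw [mul_comm, ← Algebra.smul_def, map_smul, smul_eq_mul]
        exact I.mul_mem_right _ hb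
      | zero => simp
      | add x y _ _ hx hy => rw [mul_add, map_add]; exact add_mem (hx c) (hy c)
      | smul d x _ hx => rw [smul_eq_mul, ← mul_assoc]; exact hx _
    exact this c

lemma retract_noeth {B A : Type} [CommRing B] [CommRing A] [Algebra B A] [IsNoetherianRing A]
    (R : A →ₗ[B] B) (hR : R 1 = 1) : IsNoetherianRing B := by
  have hcomap : ∀ I : Ideal B, (I.map (algebraMap B A)).comap (algebraMap B A) = I := by
    intro I
    refine le_antisymm (fun x hx => ?_) Ideal.le_comap_map
    have := retract_mem R I _ hx
    rwa [Algebra.algebraMap_eq_smul_one, map_smul, hR, smul_eq_mul, mul_one] at this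
  rw [isNoetherianRing_iff, isNoetherian_iff']
  let e : Ideal B ↪o Ideal A := OrderEmbedding.ofMapLEIff (fun I => I.map (algebraMap B A)) (by
    intro I J
    refine ⟨fun h => ?_, fun h => Ideal.map_mono h⟩
    have := Ideal.comap_mono (f := algebraMap B A) h
    rwa [hcomap, hcomap] at this)
  exact e.strictMono.wellFoundedGT

/-- A direct summand of a finitely generated algebra is finitely generated. -/
lemma summand_fin {k B A : Type} [Field k] [CommRing B] [CommRing A] [Algebra k B]
    [Algebra k A] [Algebra B A] [IsScalarTower k B A] [hA : Algebra.FiniteType k A]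
    (R : A →ₗ[B] B) (hR : R 1 = 1) :
    ∃ t : Finset B, ∀ b, b ∈ Algebra.adjoin k (t : Set B) := by
  classical
  have hAN : IsNoetherianRing A := Algebra.FiniteType.isNoetherianRing k A
  have hBN : IsNoetherianRing B := retract_noeth R hR
  have key0 : ∀ I : Ideal B, (∀ J : Ideal B, I < J →
      ∃ t : Finset B, ∀ b, ∃ c ∈ Algebra.adjoin k (t : Set B), b - c ∈ J) →
      ∃ t : Finset B, ∀ b, ∃ c ∈ Algebra.adjoin k (t : Set B), b - c ∈ I := by
    intro I ih
    let IA := I.map (algebraMap B A)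
    let R' : (A ⧸ IA) →ₗ[B] (B ⧸ I) := Submodule.liftQ (IA.restrictScalars B)
      ((Ideal.Quotient.mkₐ B I).toLinearMap.comp R) (by
        intro a ha
        exact Ideal.Quotient.eq_zero_iff_mem.2 (retract_mem R I a ha))
    have hR'mk : ∀ a, R' (Ideal.Quotient.mk IA a) = Ideal.Quotient.mk I (R a) := fun a => rfl
    letI : Algebra (B ⧸ I) (A ⧸ IA) :=
      (Ideal.quotientMap IA (algebraMap B A) Ideal.le_comap_map).toAlgebra
    have halg : ∀ b, algebraMap (B ⧸ I) (A ⧸ IA) (Ideal.Quotient.mk I b) =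
      Ideal.Quotient.mk IA (algebraMap B A b) := fun b => rfl
    have : IsScalarTower k (B ⧸ I) (A ⧸ IA) := IsScalarTower.of_algebraMap_eq fun c => by
      change Ideal.Quotient.mk IA (algebraMap k A c) =
        algebraMap (B ⧸ I) (A ⧸ IA) (Ideal.Quotient.mk I (algebraMap k B c))
      rw [halg, ← IsScalarTower.algebraMap_apply]
    let R'' : (A ⧸ IA) →ₗ[B ⧸ I] (B ⧸ I) :=
      { toFun := R'
        map_add' := map_add R'
        map_smul' := by
          intro b a
          obtain ⟨b, rfl⟩ := Ideal.Quotient.mk_surjective b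
          obtain ⟨a, rfl⟩ := Ideal.Quotient.mk_surjective a
          rw [Algebra.smul_def, halg, ← map_mul, hR'mk, ← Algebra.smul_def, map_smul, hR'mk]
          simp }
    obtain ⟨t, ht⟩ := step_fin (k := k) R'' (by
        change R' (Ideal.Quotient.mk IA 1) = 1
        rw [hR'mk, hR, map_one]) (by
      intro J hJ
      have hlt : I < J.comap (Ideal.Quotient.mk I) := by
        refine lt_of_le_of_ne (fun x hx => ?_) fun h => hJ ?_
        · rw [Ideal.mem_comap, Ideal.Quotient.eq_zero_iff_mem.2 hx]; exact zero_mem _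
        · rw [eq_bot_iff]
          intro x hx
          obtain ⟨x, rfl⟩ := Ideal.Quotient.mk_surjective x
          have : x ∈ J.comap (Ideal.Quotient.mk I) := hx
          rw [← h] at this
          exact Ideal.Quotient.eq_zero_iff_mem.2 this
      obtain ⟨t, ht⟩ := ih _ hlt
      refine ⟨t.image (Ideal.Quotient.mkₐ k I), fun b => ?_⟩
      obtain ⟨b, rfl⟩ := Ideal.Quotient.mk_surjective b
      obtain ⟨c, hc, hbc⟩ := ht b
      refine ⟨Ideal.Quotient.mkₐ k I c, ?_, by simpa using hbc⟩
      rw [Finset.coe_image, ← AlgHom.map_adjoin]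
      exact ⟨c, hc, rfl⟩)
    obtain ⟨s, hs⟩ : ∃ s : Finset B, s.image (Ideal.Quotient.mkₐ k I) = t := by
      refine ⟨t.image (Function.surjInv Ideal.Quotient.mk_surjective), ?_⟩
      rw [Finset.image_image]
      ext x
      simp [Function.surjInv_eq]
    refine ⟨s, fun b => ?_⟩
    have hb := ht (Ideal.Quotient.mkₐ k I b)
    rw [← hs, Finset.coe_image, ← AlgHom.map_adjoin] at hb
    obtain ⟨c, hc, hcb⟩ := hb
    exact ⟨c, hc, Ideal.Quotient.eq.1 hcb.symm⟩
  have key : ∀ I : Ideal B, ∃ t : Finset B, ∀ b, ∃ c ∈ Algebra.adjoin k (t : Set B), b - c ∈ I :=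
    fun I => IsNoetherian.induction (R := B) (M := B) (P := fun I : Ideal B =>
      ∃ t : Finset B, ∀ b, ∃ c ∈ Algebra.adjoin k (t : Set B), b - c ∈ I) key0 I
  obtain ⟨t, ht⟩ := key ⊥
  refine ⟨t, fun b => ?_⟩
  obtain ⟨c, hc, hbc⟩ := ht b
  rw [Ideal.mem_bot, sub_eq_zero] at hbc
  rwa [hbc]

/-- Hilbert's finiteness theorem.  Let `G` be a complex reductive
group acting rationally on a finitely generated commutative `ℂ`-algebra `A` by
algebra automorphisms.  Then the ring of invariants `A^G` is a finitely
generated `ℂ`-algebra.  Linear reductivity of the (rational) action is encoded,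
as is standard, by the existence of a Reynolds operator: a `ℂ`-linear
`G`-invariant projection `R : A → A^G` which is a map of `A^G`-modules. -/
theorem invariant_ring_finitely_generated
    (G : Type) [Group G] (A : Type) [CommRing A] [Algebra ℂ A]
    [MulSemiringAction G A] [SMulCommClass G ℂ A]
    (hfg : Algebra.FiniteType ℂ A)
    -- the Reynolds operator provided by linear reductivity of `G`:
    (R : A →ₗ[ℂ] A)
    (hR_inv : ∀ (a : A) (g : G), g • R a = R a)
    (hR_id : ∀ a : A, (∀ g : G, g • a = a) → R a = a)
    (hR_mod : ∀ a b : A, (∀ g : G, g • a = a) → R (a * b) = a * R b) :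
    ∃ s : Finset A, (∀ a ∈ s, ∀ g : G, g • a = a) ∧
      ∀ a : A, (∀ g : G, g • a = a) → a ∈ Algebra.adjoin ℂ (↑s : Set A) := by
  classical
  let B : Subalgebra ℂ A :=
    { carrier := {a | ∀ g : G, g • a = a}
      mul_mem' := fun {a b} ha hb g => by rw [smul_mul', ha g, hb g]
      add_mem' := fun {a b} ha hb g => by rw [smul_add, ha g, hb g]
      algebraMap_mem' := fun c g => by
        rw [Algebra.algebraMap_eq_smul_one, smul_comm, smul_one] }
  let R' : A →ₗ[B] B :=
    { toFun := fun a => ⟨R a, fun g => hR_inv a g⟩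
      map_add' := fun a b => Subtype.ext (map_add R a b)
      map_smul' := fun b a => Subtype.ext (hR_mod b a b.2) }
  obtain ⟨t, ht⟩ := summand_fin (k := ℂ) R' (Subtype.ext (hR_id 1 fun g => smul_one g))
  refine ⟨t.image Subtype.val, ?_, fun a ha => ?_⟩
  · intro a ha
    obtain ⟨b, _, rfl⟩ := Finset.mem_image.1 ha
    exact b.2
  · have h1 : B.val ⟨a, ha⟩ ∈ (Algebra.adjoin ℂ (t : Set B)).map B.val := ⟨_, ht ⟨a, ha⟩, rfl⟩
    rw [AlgHom.map_adjoin] at h1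
    rw [Finset.coe_image]
    exact h1
end

section
/- Let B be a finitely generated graded integral domain over C of Krull dimension r, with B_0 = C and containing a nonzero degree-1 element, and let N be a nonzero finitely generated torsion-free graded B-module. Then the function d ↦ dim_C N_d agrees for d ≫ 0 with a quasi-polynomial of degree r−1 whose leading coefficient is a (positive) constant, i.e., dim_C N_d ∼ A·d^{r−1} for some constant A > 0. -/
open Polynomial

set_option linter.unusedSectionVars false
set_option linter.unusedVariables false

lemma aux_krullDim_eq {R S : Type} [CommRing R] [CommRing S] [Algebra R S]
    [Algebra.IsIntegral R S] (hinj : Function.Injective (algebraMap R S)) :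
    ringKrullDim R = ringKrullDim S := by
  apply le_antisymm
  · unfold ringKrullDim Order.krullDim
    apply iSup_le
    intro l
    obtain ⟨Q, -, hQ, hQ2⟩ := Ideal.exists_ideal_over_prime_of_isIntegral
      (RelSeries.head l).asIdeal (⊥ : Ideal S) (by
        rw [← RingHom.ker_eq_comap_bot, (RingHom.injective_iff_ker_eq_bot _).1 hinj]
        exact bot_le)
    have : Q.LiesOver (RelSeries.head l).asIdeal := ⟨hQ2.symm⟩
    obtain ⟨L, hL, -, -⟩ := Ideal.exists_ltSeries_of_hasGoingUp l Q
    rw [← hL]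
    exact le_iSup (fun p : LTSeries (PrimeSpectrum S) => ((p.length : ℕ) : WithBot ℕ∞)) L
  · apply Order.krullDim_le_of_strictMono (PrimeSpectrum.comap (algebraMap R S))
    intro I J hIJ
    exact Ideal.IsIntegral.comap_lt_comap (R := R) (I := I.asIdeal) (J := J.asIdeal) hIJ

lemma aux_noether (B : Type) [CommRing B] [IsDomain B] [Algebra ℂ B]
    (hfg : Algebra.FiniteType ℂ B) (r : ℕ) (hr : ringKrullDim B = r) :
    ∃ g : (MvPolynomial (Fin r) ℂ) →ₐ[ℂ] B, Function.Injective g ∧ g.Finite := by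
  obtain ⟨s, g, hg, hf⟩ := exists_finite_inj_algHom_of_fg ℂ B
  have : s = r := by
    let _ := g.toRingHom.toAlgebra
    have : Module.Finite (MvPolynomial (Fin s) ℂ) B := hf
    have h := aux_krullDim_eq (R := MvPolynomial (Fin s) ℂ) (S := B) hg
    rw [hr, MvPolynomial.ringKrullDim_of_isNoetherianRing, ringKrullDim_eq_zero_of_field] at h
    simp at h
    exact_mod_cast h
  subst this
  exact ⟨g, hg, hf⟩

def AuxQP (f : ℕ → ℚ) : Prop :=
  ∃ (p : ℕ) (_ : 0 < p) (q : ℕ → Polynomial ℚ) (D : ℕ), ∀ d : ℕ, D ≤ d →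
    f d = (q (d % p)).eval (d : ℚ)

lemma AuxQP.of_zero {f : ℕ → ℚ} (D : ℕ) (h : ∀ d, D ≤ d → f d = 0) : AuxQP f :=
  ⟨1, one_pos, fun _ => 0, D, fun d hd => by simp [h d hd]⟩

lemma AuxQP.sub {f g : ℕ → ℚ} (hf : AuxQP f) (hg : AuxQP g) : AuxQP (fun d => f d - g d) := by
  obtain ⟨p, hp, q, D, h⟩ := hf
  obtain ⟨p', hp', q', D', h'⟩ := hg
  refine ⟨p * p', Nat.mul_pos hp hp', fun i => q (i % p) - q' (i % p'), max D D', fun d hd => ?_⟩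
  simp only [eval_sub]
  rw [h d (le_trans (le_max_left _ _) hd), h' d (le_trans (le_max_right _ _) hd),
    Nat.mod_mod_of_dvd _ (Dvd.intro _ rfl), Nat.mod_mod_of_dvd _ (Dvd.intro_left _ rfl)]

lemma AuxQP.shift {f : ℕ → ℚ} (hf : AuxQP f) (e : ℕ) : AuxQP (fun d => f (d + e)) := by
  obtain ⟨p, hp, q, D, h⟩ := hf
  refine ⟨p, hp, fun i => (q ((i + e) % p)).comp (X + C (e : ℚ)), D, fun d hd => ?_⟩
  simp only [eval_comp, eval_add, eval_X, eval_C]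
  rw [h (d + e) (by omega)]
  simp

lemma aux_antidiff (S : Polynomial ℚ) :
    ∃ R : Polynomial ℚ, ∀ x : ℚ, R.eval (x + 1) = R.eval x + S.eval x := by
  induction S using Polynomial.induction_on' with
  | add p q hp hq =>
    obtain ⟨R, hR⟩ := hp
    obtain ⟨R', hR'⟩ := hq
    exact ⟨R + R', fun x => by simp only [eval_add, hR, hR']; ring⟩
  | monomial n a =>
    refine ⟨C (a / (n + 1)) * Polynomial.bernoulli (n + 1), fun x => ?_⟩
    have h := Polynomial.bernoulli_eval_one_add (n + 1) x
    rw [add_comm] at h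
    have hn : (n : ℚ) + 1 ≠ 0 := by positivity
    simp only [eval_mul, eval_C, eval_monomial]
    rw [h]
    simp
    field_simp

lemma AuxQP.of_diff {f g : ℕ → ℚ} (hg : AuxQP g) (e : ℕ) (he : 0 < e)
    (h : ∀ d, f (d + e) = f d + g d) : AuxQP f := by
  obtain ⟨p, hp, q, D, hq⟩ := hg
  have hP : 0 < e * p := Nat.mul_pos he hp
  have h1 : ∀ d n : ℕ, f (d + n * e) = f d + ∑ j ∈ Finset.range n, g (d + j * e) := by
    intro d n
    induction n with
    | zero => simp
    | succ n ih =>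
      rw [Finset.sum_range_succ, ← add_assoc, ← ih, ← h]
      congr 1; ring
  let H : ℕ → Polynomial ℚ := fun i =>
    ∑ j ∈ Finset.range p, (q ((i + j * e) % p)).comp (X + C ((j * e : ℕ) : ℚ))
  have h2 : ∀ d, D ≤ d → f (d + e * p) = f d + (H (d % (e * p))).eval (d : ℚ) := by
    intro d hd
    rw [mul_comm e p, h1]
    congr 1
    simp only [H, eval_finsetSum, eval_comp, eval_add, eval_X, eval_C]
    apply Finset.sum_congr rfl
    intro j _
    rw [hq _ (by omega)]
    rw [Nat.add_mod (d % (p * e)), Nat.mod_mod_of_dvd _ (Dvd.intro _ rfl), ← Nat.add_mod]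
    push_cast
    rfl
  choose R hR using fun i : ℕ => aux_antidiff ((H i).comp (C ((e * p : ℕ) : ℚ) * X + C (i : ℚ)))
  have h3 : ∀ i, i < e * p → ∀ k, f (i + (D + k) * (e * p)) =
      f (i + D * (e * p)) - (R i).eval (D : ℚ) + (R i).eval ((D + k : ℕ) : ℚ) := by
    intro i hi k
    induction k with
    | zero => simp
    | succ k ih =>
      have := h2 (i + (D + k) * (e * p)) (by nlinarith)
      rw [show i + (D + (k + 1)) * (e * p) = i + (D + k) * (e * p) + e * p by ring, this, ih]
      have h4 := hR i ((D + k : ℕ) : ℚ)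
      rw [show ((D + (k + 1) : ℕ) : ℚ) = ((D + k : ℕ) : ℚ) + 1 by push_cast; ring, h4]
      rw [Nat.add_mul_mod_self_right, Nat.mod_eq_of_lt hi]
      simp only [eval_comp, eval_add, eval_mul, eval_X, eval_C]
      rw [show ((i + (D + k) * (e * p) : ℕ) : ℚ) = ((e * p : ℕ) : ℚ) * ((D + k : ℕ) : ℚ) + i by
        push_cast; ring]
      ring
  refine ⟨e * p, hP, fun i => C (f (i + D * (e * p)) - (R i).eval (D : ℚ)) +
    (R i).comp (C ((e * p : ℕ) : ℚ)⁻¹ * (X - C (i : ℚ))), D * (e * p), fun d hd => ?_⟩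
  have hk : D ≤ d / (e * p) := (Nat.le_div_iff_mul_le hP).2 hd
  obtain ⟨k, hk⟩ := Nat.exists_eq_add_of_le hk
  have h5 := h3 (d % (e * p)) (Nat.mod_lt _ hP) k
  have h6 : d % (e * p) + (D + k) * (e * p) = d := by
    rw [← hk]; exact Nat.mod_add_div' _ _
  rw [h6] at h5
  rw [h5]
  simp only [eval_comp, eval_add, eval_mul, eval_X, eval_C, eval_sub]
  congr 2
  have h7 : (d : ℚ) = ((d % (e * p) : ℕ) : ℚ) + ((D + k : ℕ) : ℚ) * ((e * p : ℕ) : ℚ) := by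
    exact_mod_cast h6.symm
  have h8 : ((e * p : ℕ) : ℚ) ≠ 0 := by exact_mod_cast hP.ne'
  generalize ((e * p : ℕ) : ℚ) = u at *
  rw [h7]
  field_simp
  ring

open Filter Topology in
lemma aux_degree (q : Polynomial ℚ) (k : ℕ) (c C' : ℚ) (hc : 0 < c) (u : ℕ → ℕ)
    (hu : Tendsto u atTop atTop)
    (h : ∀ᶠ m in atTop, c * (u m : ℚ) ^ k ≤ q.eval (u m : ℚ) ∧
      q.eval (u m : ℚ) ≤ C' * (u m : ℚ) ^ k) :
    q.natDegree = k ∧ 0 < q.leadingCoeff := by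
  have hv : Tendsto (fun m => (u m : ℚ)) atTop atTop := tendsto_natCast_atTop_atTop.comp hu
  have hpos : ∀ᶠ m in atTop, 0 < (u m : ℚ) := hv.eventually_gt_atTop 0
  have hle : ∀ᶠ m in atTop, c ≤ q.eval (u m : ℚ) / (X ^ k : Polynomial ℚ).eval (u m : ℚ) := by
    filter_upwards [h, hpos] with m hm hm'
    simp only [eval_pow, eval_X]
    rw [le_div_iff₀ (by positivity)]
    exact hm.1
  have hge : ∀ᶠ m in atTop, q.eval (u m : ℚ) / (X ^ k : Polynomial ℚ).eval (u m : ℚ) ≤ C' := by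
    filter_upwards [h, hpos] with m hm hm'
    simp only [eval_pow, eval_X]
    rw [div_le_iff₀ (by positivity)]
    exact hm.2
  rcases lt_trichotomy q.degree (X ^ k : Polynomial ℚ).degree with hd | hd | hd
  · have := (Polynomial.div_tendsto_atTop_zero_of_degree_lt _ _ hd).comp hv
    have := ge_of_tendsto this hle
    linarith
  · have h1 := (Polynomial.div_tendsto_atTop_leadingCoeff_div_of_degree_eq _ _ hd).comp hv
    have := ge_of_tendsto h1 hle
    simp at this
    refine ⟨?_, by linarith⟩
    rw [degree_X_pow] at hd
    exact natDegree_eq_of_degree_eq_some hd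
  · have h1 := (Polynomial.abs_div_tendsto_atTop_atTop_of_degree_gt _ _ hd (by simp)).comp hv
    obtain ⟨m, h2, h3, h4⟩ := ((h1.eventually_gt_atTop C').and (hle.and hge)).exists
    simp only [Function.comp] at h2
    rw [abs_of_nonneg (by linarith)] at h2
    linarith

open Filter Topology in
lemma aux_lead_le (P Q : Polynomial ℚ) (k : ℕ) (hP : P.natDegree = k) (hQ : Q.natDegree = k)
    (hP0 : P ≠ 0) (hQ0 : Q ≠ 0)
    (h : ∀ᶠ m : ℕ in atTop, P.eval (m : ℚ) ≤ Q.eval (m : ℚ)) :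
    P.leadingCoeff ≤ Q.leadingCoeff := by
  have hv : Tendsto (fun m : ℕ => (m : ℚ)) atTop atTop := tendsto_natCast_atTop_atTop
  have h1 := (Polynomial.div_tendsto_atTop_leadingCoeff_div_of_degree_eq P (X ^ k)
    (by rw [degree_X_pow, degree_eq_natDegree hP0, hP])).comp hv
  have h2 := (Polynomial.div_tendsto_atTop_leadingCoeff_div_of_degree_eq Q (X ^ k)
    (by rw [degree_X_pow, degree_eq_natDegree hQ0, hQ])).comp hv
  have := le_of_tendsto_of_tendsto h1 h2 (by
    filter_upwards [h] with m hm
    simp only [Function.comp, eval_pow, eval_X]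
    gcongr)
  simpa using this

open Filter Topology in
/-- Numerical conclusion. -/
lemma aux_final (f : ℕ → ℚ) (hf : AuxQP f) (hmono : ∀ d, f d ≤ f (d + 1)) (k : ℕ) (c C' : ℚ)
    (hc : 0 < c)
    (h : ∀ᶠ d : ℕ in atTop, c * (d : ℚ) ^ k ≤ f d ∧ f d ≤ C' * (d : ℚ) ^ k) :
    ∃ (p : ℕ) (_ : 0 < p) (q : ℕ → Polynomial ℚ) (A : ℚ),
      0 < A ∧
      (∀ i : ℕ, i < p → (q i).natDegree = k ∧ (q i).leadingCoeff = A) ∧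
      ∃ D : ℕ, ∀ d : ℕ, D ≤ d → f d = (q (d % p)).eval (d : ℚ) := by
  obtain ⟨p, hp, q, D, hq⟩ := hf
  have hmono' : Monotone f := monotone_nat_of_le_succ hmono
  have hu : ∀ i, Tendsto (fun m : ℕ => p * m + i) atTop atTop := fun i =>
    tendsto_atTop_mono (fun m => by simp only [id]; nlinarith) tendsto_id
  have hev : ∀ i, i < p → ∀ᶠ m in atTop, f (p * m + i) = (q i).eval ((p * m + i : ℕ) : ℚ) := by
    intro i hi
    filter_upwards [(hu i).eventually_ge_atTop D] with m hm
    rw [hq _ hm]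
    simp [Nat.mod_eq_of_lt hi]
  have hdeg : ∀ i, i < p → (q i).natDegree = k ∧ 0 < (q i).leadingCoeff := by
    intro i hi
    apply aux_degree (q i) k c C' hc _ (hu i)
    filter_upwards [hev i hi, (hu i).eventually h] with m h1 h2
    rw [← h1]
    exact h2
  have hpq : (p : ℚ) ≠ 0 := by exact_mod_cast hp.ne'
  have hle : ∀ i, i < p → ∀ j, j < p → (q i).leadingCoeff ≤ (q j).leadingCoeff := by
    intro i hi j hj
    have hnd : ∀ a : ℚ, (C (p : ℚ) * X + C a).natDegree = 1 := fun a =>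
      natDegree_linear hpq
    have hlc : ∀ a : ℚ, (C (p : ℚ) * X + C a).leadingCoeff = (p : ℚ) := fun a =>
      leadingCoeff_linear hpq
    have hnc : ∀ i, i < p → ∀ a : ℚ, ((q i).comp (C (p : ℚ) * X + C a)).natDegree = k := by
      intro i hi a
      rw [natDegree_comp, hnd, (hdeg i hi).1, mul_one]
    have hlcc : ∀ i, i < p → ∀ a : ℚ, ((q i).comp (C (p : ℚ) * X + C a)).leadingCoeff =
        (q i).leadingCoeff * p ^ k := by
      intro i hi a
      rw [leadingCoeff_comp (by rw [hnd]; simp), hlc, (hdeg i hi).1]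
    have hne : ∀ i, i < p → ∀ a : ℚ, ((q i).comp (C (p : ℚ) * X + C a)) ≠ 0 := by
      intro i hi a h0
      have := hlcc i hi a
      rw [h0] at this
      have h1 := (hdeg i hi).2
      have : (q i).leadingCoeff * (p : ℚ) ^ k > 0 := by positivity
      simp_all
    have key := aux_lead_le ((q i).comp (C (p : ℚ) * X + C (i : ℚ)))
      ((q j).comp (C (p : ℚ) * X + C ((p + j : ℕ) : ℚ))) k (hnc i hi _) (hnc j hj _)
      (hne i hi _) (hne j hj _) (by
        filter_upwards [hev i hi, (tendsto_add_atTop_nat 1).eventually (hev j hj)] with m h1 h2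
        have h3 : f (p * m + i) ≤ f (p * (m + 1) + j) := hmono' (by nlinarith)
        rw [h1, h2] at h3
        simp only [eval_comp, eval_add, eval_mul, eval_X, eval_C]
        have h4 : (p : ℚ) * m + ((p + j : ℕ) : ℚ) = ((p * (m + 1) + j : ℕ) : ℚ) := by
          push_cast; ring
        have h5 : (p : ℚ) * m + (i : ℚ) = ((p * m + i : ℕ) : ℚ) := by
          push_cast; ring
        rw [h4, h5]
        exact h3)
    rw [hlcc i hi, hlcc j hj] at key
    exact le_of_mul_le_mul_right key (by positivity)
  exact ⟨p, hp, q, (q 0).leadingCoeff, (hdeg 0 hp).2, fun i hi =>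
    ⟨(hdeg i hi).1, le_antisymm (hle i hi 0 hp) (hle 0 hp i hi)⟩, D, hq⟩

structure AuxGr {B N ι : Type} [CommRing B] [Algebra ℂ B] [AddCommGroup N] [Module ℂ N]
    [Module B N] (𝒩 : ℕ → Submodule ℂ N) (π : ℕ → N →ₗ[ℂ] N) (b : ι → B) (e : ι → ℕ) : Prop where
  mem : ∀ d m, π d m ∈ 𝒩 d
  same : ∀ d m, m ∈ 𝒩 d → π d m = m
  ne : ∀ d d' m, m ∈ 𝒩 d → d ≠ d' → π d' m = 0
  zero : ∀ m, (∀ d, π d m = 0) → m = 0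
  fin : ∀ m, ∃ D, ∀ d, D ≤ d → π d m = 0
  comm : ∀ i d m, π (d + e i) (b i • m) = b i • π d m
  low : ∀ i d m, d < e i → π d (b i • m) = 0
  epos : ∀ i, 0 < e i
  gen : Algebra.adjoin ℂ (Set.range b) = ⊤

section HS

variable {B N ι : Type} [CommRing B] [Algebra ℂ B] [AddCommGroup N] [Module ℂ N]
    [Module B N] [IsScalarTower ℂ B N] [SMulCommClass B ℂ N]
    {𝒩 : ℕ → Submodule ℂ N} {π : ℕ → N →ₗ[ℂ] N} {b : ι → B} {e : ι → ℕ}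

lemma AuxGr.scalar (_h : AuxGr 𝒩 π b e) (K L : Submodule B N) 
    (hb : ∀ i, ∀ m ∈ K, b i • m ∈ L) (β : B) : ∃ c : ℂ, ∀ m ∈ K, β • m - c • m ∈ L := by
  have hβ : β ∈ Algebra.adjoin ℂ (Set.range b) := by rw [_h.gen]; trivial
  induction hβ using Algebra.adjoin_induction with
  | mem x hx =>
    obtain ⟨i, rfl⟩ := hx
    exact ⟨0, fun m hm => by simpa using hb i m hm⟩
  | algebraMap c => exact ⟨c, fun m hm => by simp⟩
  | add x y hx hy ihx ihy =>
    obtain ⟨c, hc⟩ := ihx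
    obtain ⟨c', hc'⟩ := ihy
    refine ⟨c + c', fun m hm => ?_⟩
    have := L.add_mem (hc m hm) (hc' m hm)
    convert this using 1
    rw [add_smul, add_smul]; abel
  | mul x y hx hy ihx ihy =>
    obtain ⟨c, hc⟩ := ihx
    obtain ⟨c', hc'⟩ := ihy
    refine ⟨c * c', fun m hm => ?_⟩
    have h1 : x • (y • m - c' • m) ∈ L := L.smul_mem _ (hc' m hm)
    have h2 : c' • (x • m - c • m) ∈ L := L.smul_of_tower_mem c' (hc m hm)
    have := L.add_mem h1 h2
    convert this using 1
    rw [smul_sub, smul_sub, mul_smul, mul_comm c c', mul_smul, smul_comm x c' m]; abel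

lemma AuxGr.span (h : AuxGr 𝒩 π b e) (K L : Submodule B N) (hLK : L ≤ K)
    (hb : ∀ i, ∀ m ∈ K, b i • m ∈ L) (S : Set N) (hS : Submodule.span B S = K) (m : N)
    (hm : m ∈ K) : ∃ n ∈ Submodule.span ℂ S, m - n ∈ L := by
  rw [← hS] at hm
  induction hm using Submodule.span_induction with
  | mem x hx => exact ⟨x, Submodule.subset_span hx, by simp⟩
  | zero => exact ⟨0, zero_mem _, by simp⟩
  | add x y hx hy ihx ihy =>
    obtain ⟨n, hn, h1⟩ := ihx
    obtain ⟨n', hn', h2⟩ := ihy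
    exact ⟨n + n', add_mem hn hn', by rw [add_sub_add_comm]; exact add_mem h1 h2⟩
  | smul β x hx ih =>
    obtain ⟨n, hn, h1⟩ := ih
    obtain ⟨c, hc⟩ := h.scalar K L hb β
    refine ⟨c • n, Submodule.smul_mem _ _ hn, ?_⟩
    have h2 := hc x (hS ▸ hx)
    have h3 : c • (x - n) ∈ L := L.smul_of_tower_mem c h1
    have := L.add_mem h2 h3
    convert this using 1
    rw [smul_sub]; abel

def AuxHom (π : ℕ → N →ₗ[ℂ] N) (K : Submodule B N) : Prop := ∀ d, ∀ m ∈ K, π d m ∈ K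

noncomputable def auxF (𝒩 : ℕ → Submodule ℂ N) (K : Submodule B N) (d : ℕ) : ℚ :=
  (Module.finrank ℂ ((K.restrictScalars ℂ ⊓ 𝒩 d : Submodule ℂ N)) : ℚ)

lemma aux_rank {V W : Type} [AddCommGroup V] [Module ℂ V] [AddCommGroup W] [Module ℂ W]
    (g : V →ₗ[ℂ] W) (S : Submodule ℂ V) [FiniteDimensional ℂ S] :
    Module.finrank ℂ (S.map g) + Module.finrank ℂ (S ⊓ LinearMap.ker g : Submodule ℂ V) =
      Module.finrank ℂ S := by
  have h := LinearMap.finrank_range_add_finrank_ker (g.domRestrict S)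
  rw [LinearMap.range_domRestrict, LinearMap.ker_domRestrict] at h
  rw [← h]
  congr 1
  rw [← Submodule.map_comap_subtype]
  exact (LinearEquiv.finrank_eq (Submodule.equivMapOfInjective _ S.injective_subtype _)).symm

lemma AuxGr.dims (h : AuxGr 𝒩 π b e) [∀ d, FiniteDimensional ℂ (𝒩 d)] (K L : Submodule B N)
    (hLK : L ≤ K) (hK : AuxHom π K) (hL : AuxHom π L) (i : ι) (d : ℕ) :
    auxF 𝒩 K d + auxF 𝒩 L (d + e i) =
      auxF 𝒩 (K ⊓ L.comap (LinearMap.lsmul B N (b i))) d +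
      auxF 𝒩 (L ⊔ K.map (LinearMap.lsmul B N (b i))) (d + e i) := by
  let T : N →ₗ[ℂ] N := (LinearMap.lsmul B N (b i)).restrictScalars ℂ
  let Q : N →ₗ[ℂ] (N ⧸ L.restrictScalars ℂ) := (L.restrictScalars ℂ).mkQ
  have hfd : ∀ (S : Submodule ℂ N) d, FiniteDimensional ℂ (S ⊓ 𝒩 d : Submodule ℂ N) := fun S d =>
    Submodule.finiteDimensional_of_le inf_le_right
  have h1 := aux_rank (Q ∘ₗ T) (K.restrictScalars ℂ ⊓ 𝒩 d)
  have h2 := aux_rank Q ((L ⊔ K.map (LinearMap.lsmul B N (b i))).restrictScalars ℂ ⊓ 𝒩 (d + e i))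
  have e1 : (K.restrictScalars ℂ ⊓ 𝒩 d ⊓ LinearMap.ker (Q ∘ₗ T) : Submodule ℂ N) =
      (K ⊓ L.comap (LinearMap.lsmul B N (b i))).restrictScalars ℂ ⊓ 𝒩 d := by
    ext m
    simp [Q, T]
    tauto
  have e2 : ((L ⊔ K.map (LinearMap.lsmul B N (b i))).restrictScalars ℂ ⊓ 𝒩 (d + e i) ⊓
      LinearMap.ker Q : Submodule ℂ N) = L.restrictScalars ℂ ⊓ 𝒩 (d + e i) := by
    ext m
    simp only [Q, Submodule.ker_mkQ, Submodule.mem_inf, Submodule.restrictScalars_mem]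
    constructor
    · tauto
    · rintro ⟨h1, h2⟩
      exact ⟨⟨Submodule.mem_sup_left h1, h2⟩, h1⟩
  have e3 : (K.restrictScalars ℂ ⊓ 𝒩 d).map (Q ∘ₗ T) =
      ((L ⊔ K.map (LinearMap.lsmul B N (b i))).restrictScalars ℂ ⊓ 𝒩 (d + e i)).map Q := by
    ext w
    constructor
    · rintro ⟨m, ⟨hm1, hm2⟩, rfl⟩
      refine ⟨T m, ⟨?_, ?_⟩, rfl⟩
      · exact Submodule.mem_sup_right ⟨m, hm1, rfl⟩
      · have := h.comm i d m
        rw [h.same d m hm2] at this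
        change b i • m ∈ _
        rw [← this]
        exact h.mem _ _
    · rintro ⟨m, ⟨hm1, hm2⟩, rfl⟩
      obtain ⟨l, hl, y, ⟨k, hk, rfl⟩, hy⟩ := Submodule.mem_sup.1 hm1
      refine ⟨π d k, ⟨hK d k hk, h.mem d k⟩, ?_⟩
      have h3 : m = π (d + e i) l + b i • π d k := by
        rw [← h.comm, ← map_add]
        have h4 : l + b i • k = m := hy
        rw [h4, h.same _ m hm2]
      change Q (b i • π d k) = Q m
      rw [h3, map_add]
      have : Q (π (d + e i) l) = 0 := by
        simp only [Q, Submodule.mkQ_apply]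
        exact (Submodule.Quotient.mk_eq_zero _).2 (hL _ _ hl)
      rw [this, zero_add]
  rw [e1, e3] at h1
  rw [e2] at h2
  unfold auxF
  rw [← h1, ← h2]
  push_cast
  ring

lemma AuxGr.main (h : AuxGr 𝒩 π b e) [∀ d, FiniteDimensional ℂ (𝒩 d)] [IsNoetherian B N]
    [Finite ι] (s : Finset ι) :
    ∀ (K L : Submodule B N), L ≤ K → AuxHom π K → AuxHom π L →
    (∀ i, i ∉ s → ∀ m ∈ K, b i • m ∈ L) → AuxQP (fun d => auxF 𝒩 K d - auxF 𝒩 L d) := by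
  classical
  induction s using Finset.induction_on with
  | empty =>
    intro K L hLK hK hL hb
    obtain ⟨S, hS⟩ := IsNoetherian.noetherian K
    choose D hD using h.fin
    refine AuxQP.of_zero (S.sup D) fun d hd => ?_
    have hz : ∀ n ∈ Submodule.span ℂ (S : Set N), π d n = 0 := by
      intro n hn
      have : Submodule.span ℂ (S : Set N) ≤ LinearMap.ker (π d) := by
        rw [Submodule.span_le]
        intro x hx
        exact hD x d (le_trans (Finset.le_sup hx) hd)
      exact this hn
    have : K.restrictScalars ℂ ⊓ 𝒩 d = L.restrictScalars ℂ ⊓ 𝒩 d := by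
      apply le_antisymm
      · rintro m ⟨hm, hm2⟩
        refine ⟨?_, hm2⟩
        obtain ⟨n, hn, hmn⟩ := h.span K L hLK (fun i => hb i (by simp)) S hS m hm
        have := hL d _ hmn
        rw [map_sub, hz n hn, sub_zero, h.same d m hm2] at this
        exact this
      · exact inf_le_inf_right _ hLK
    simp only [auxF]
    rw [this, sub_self]
  | insert i s his ih =>
    intro K L hLK hK hL hb
    have c1 : L ≤ K ⊓ L.comap (LinearMap.lsmul B N (b i)) := by
      intro m hm
      exact ⟨hLK hm, L.smul_mem _ hm⟩
    have c2 : L ⊔ K.map (LinearMap.lsmul B N (b i)) ≤ K := by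
      refine sup_le hLK ?_
      rintro _ ⟨m, hm, rfl⟩
      exact K.smul_mem _ hm
    have c3 : AuxHom π (K ⊓ L.comap (LinearMap.lsmul B N (b i))) := by
      rintro d m ⟨hm, hm2⟩
      refine ⟨hK d m hm, ?_⟩
      change b i • π d m ∈ L
      rw [← h.comm]
      exact hL _ _ hm2
    have c4 : AuxHom π (L ⊔ K.map (LinearMap.lsmul B N (b i))) := by
      intro d m hm
      obtain ⟨l, hl, y, ⟨k, hk, rfl⟩, rfl⟩ := Submodule.mem_sup.1 hm
      rw [map_add]
      refine add_mem (Submodule.mem_sup_left (hL _ _ hl)) ?_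
      change π d (b i • k) ∈ _
      rcases lt_or_ge d (e i) with hd | hd
      · rw [h.low i d k hd]; exact zero_mem _
      · obtain ⟨d', rfl⟩ := Nat.exists_eq_add_of_le' hd
        rw [h.comm]
        exact Submodule.mem_sup_right ⟨π d' k, hK _ _ hk, rfl⟩
    have q1 := ih _ _ c1 c3 hL (by
      rintro j hj m ⟨hm, hm2⟩
      by_cases hji : j = i
      · subst hji; exact hm2
      · exact hb j (by simp [hj, hji]) m hm)
    have q2 := ih _ _ c2 hK c4 (by
      intro j hj m hm
      by_cases hji : j = i
      · subst hji; exact Submodule.mem_sup_right ⟨m, hm, rfl⟩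
      · exact Submodule.mem_sup_left (hb j (by simp [hj, hji]) m hm))
    refine AuxQP.of_diff ((q2.shift (e i)).sub q1) (e i) (h.epos i) fun d => ?_
    have := h.dims K L hLK hK hL i d
    linarith

lemma AuxGr.hilbert (h : AuxGr 𝒩 π b e) [∀ d, FiniteDimensional ℂ (𝒩 d)] [IsNoetherian B N]
    [Finite ι] : AuxQP (fun d => (Module.finrank ℂ (𝒩 d) : ℚ)) := by
  have := Fintype.ofFinite ι
  have h1 := h.main Finset.univ (⊤ : Submodule B N) ⊥ bot_le (fun _ _ _ => trivial)
    (by intro d m hm; rw [(Submodule.mem_bot B).1 hm, map_zero]; exact zero_mem _)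
    (by simp)
  have h2 : ∀ d, auxF 𝒩 (⊤ : Submodule B N) d - auxF 𝒩 (⊥ : Submodule B N) d =
      (Module.finrank ℂ (𝒩 d) : ℚ) := by
    intro d
    simp only [auxF]
    rw [Submodule.restrictScalars_top, Submodule.restrictScalars_bot, top_inf_eq, bot_inf_eq,
      finrank_bot]
    simp
  simpa only [h2] using h1

end HS

section Bounds

variable {B N ι : Type} [CommRing B] [Algebra ℂ B] [AddCommGroup N] [Module ℂ N]
    [Module B N] [IsScalarTower ℂ B N] [SMulCommClass B ℂ N]
    {𝒩 : ℕ → Submodule ℂ N} {π : ℕ → N →ₗ[ℂ] N} {b : ι → B} {e : ι → ℕ}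

lemma aux_finrank_restrictDegree (r j : ℕ) :
    Module.finrank ℂ (MvPolynomial.restrictDegree (Fin r) ℂ j) = (j + 1) ^ r := by
  have h := Module.finrank_eq_nat_card_basis
    (MvPolynomial.basisRestrictSupport ℂ {n : Fin r →₀ ℕ | ∀ i, n i ≤ j})
  have e : {n : Fin r →₀ ℕ | ∀ i, n i ≤ j} ≃ (Fin r → Fin (j + 1)) :=
    { toFun := fun n i => ⟨n.1 i, Nat.lt_succ_of_le (n.2 i)⟩
      invFun := fun v => ⟨Finsupp.equivFunOnFinite.symm (fun i => (v i : ℕ)), fun i => by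
        simpa using Nat.le_of_lt_succ (v i).2⟩
      left_inv := fun n => by ext; simp
      right_inv := fun v => by ext; simp }
  rw [Nat.card_congr e] at h
  rw [MvPolynomial.restrictDegree, h]
  simp

lemma aux_restrictDegree_mono (r : ℕ) {j j' : ℕ} (h : j ≤ j') :
    MvPolynomial.restrictDegree (Fin r) ℂ j ≤ MvPolynomial.restrictDegree (Fin r) ℂ j' := by
  apply MvPolynomial.restrictSupport_mono
  intro n hn i
  exact (hn i).trans h

lemma aux_restrictDegree_mul (r : ℕ) {j j' : ℕ} {p p' : MvPolynomial (Fin r) ℂ}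
    (h : p ∈ MvPolynomial.restrictDegree (Fin r) ℂ j)
    (h' : p' ∈ MvPolynomial.restrictDegree (Fin r) ℂ j') :
    p * p' ∈ MvPolynomial.restrictDegree (Fin r) ℂ (j + j') := by
  rw [MvPolynomial.mem_restrictDegree_iff_sup] at *
  intro i
  have h1 := MvPolynomial.degreeOf_mul_le i p p'
  have h2 := h i
  have h3 := h' i
  simp only [MvPolynomial.degreeOf_def] at h1
  omega

lemma aux_restrictDegree_exists (r : ℕ) (p : MvPolynomial (Fin r) ℂ) :
    p ∈ MvPolynomial.restrictDegree (Fin r) ℂ p.totalDegree :=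
  MvPolynomial.restrictTotalDegree_le_restrictDegree _ _ _
    ((MvPolynomial.mem_restrictTotalDegree _ _ _).2 le_rfl)

/-- The span of `g p • n k` with `p` of bounded degree. -/
noncomputable def auxPhi {r s : ℕ} (g : MvPolynomial (Fin r) ℂ →ₐ[ℂ] B) (n : Fin s → N) (j : ℕ) :
    (Fin s → MvPolynomial.restrictDegree (Fin r) ℂ j) →ₗ[ℂ] N :=
  ∑ k, ((LinearMap.toSpanSingleton B N (n k)).restrictScalars ℂ ∘ₗ g.toLinearMap ∘ₗ
    (MvPolynomial.restrictDegree (Fin r) ℂ j).subtype) ∘ₗ LinearMap.proj k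

lemma mem_range_auxPhi {r s : ℕ} (g : MvPolynomial (Fin r) ℂ →ₐ[ℂ] B) (n : Fin s → N) (j : ℕ)
    (m : N) : m ∈ LinearMap.range (auxPhi g n j) ↔
      ∃ p : Fin s → MvPolynomial (Fin r) ℂ,
        (∀ k, p k ∈ MvPolynomial.restrictDegree (Fin r) ℂ j) ∧ ∑ k, g (p k) • n k = m := by
  constructor
  · rintro ⟨p, rfl⟩
    exact ⟨fun k => p k, fun k => (p k).2, by simp [auxPhi]⟩
  · rintro ⟨p, hp, rfl⟩
    exact ⟨fun k => ⟨p k, hp k⟩, by simp [auxPhi]⟩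

lemma finrank_range_auxPhi {r s : ℕ} (g : MvPolynomial (Fin r) ℂ →ₐ[ℂ] B) (n : Fin s → N) (j : ℕ) :
    Module.finrank ℂ (LinearMap.range (auxPhi g n j)) ≤ s * (j + 1) ^ r := by
  refine (LinearMap.finrank_range_le _).trans ?_
  rw [Module.finrank_pi_fintype]
  simp [aux_finrank_restrictDegree]

lemma range_auxPhi_mono {r s : ℕ} (g : MvPolynomial (Fin r) ℂ →ₐ[ℂ] B) (n : Fin s → N) {j j' : ℕ}
    (h : j ≤ j') : LinearMap.range (auxPhi g n j) ≤ LinearMap.range (auxPhi g n j') := by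
  intro m hm
  rw [mem_range_auxPhi] at *
  obtain ⟨p, hp, rfl⟩ := hm
  exact ⟨p, fun k => aux_restrictDegree_mono r h (hp k), rfl⟩

lemma range_auxPhi_smul {r s : ℕ} (g : MvPolynomial (Fin r) ℂ →ₐ[ℂ] B) (n : Fin s → N) {j j' : ℕ}
    (p : MvPolynomial (Fin r) ℂ) (hp : p ∈ MvPolynomial.restrictDegree (Fin r) ℂ j)
    (m : N) (hm : m ∈ LinearMap.range (auxPhi g n j')) :
    g p • m ∈ LinearMap.range (auxPhi g n (j + j')) := by
  rw [mem_range_auxPhi] at *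
  obtain ⟨p', hp', rfl⟩ := hm
  exact ⟨fun k => p * p' k, fun k => aux_restrictDegree_mul r hp (hp' k), by
    simp [Finset.smul_sum, mul_smul]⟩

lemma aux_finite_gens {r : ℕ} (g : MvPolynomial (Fin r) ℂ →ₐ[ℂ] B) (hg : g.Finite)
    [Module.Finite B N] : ∃ (s : ℕ) (n : Fin s → N), ∀ m : N, ∃ p : Fin s → MvPolynomial (Fin r) ℂ,
      ∑ k, g (p k) • n k = m := by
  let _ := g.toRingHom.toAlgebra
  let _ : Module (MvPolynomial (Fin r) ℂ) N := Module.compHom N g.toRingHom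
  have : IsScalarTower (MvPolynomial (Fin r) ℂ) B N := ⟨fun p x m => by
    change (g p * x) • m = g p • x • m
    rw [mul_smul]⟩
  have : Module.Finite (MvPolynomial (Fin r) ℂ) B := hg
  have : Module.Finite (MvPolynomial (Fin r) ℂ) N := Module.Finite.trans B N
  obtain ⟨s, n, hn⟩ := Module.Finite.exists_fin (R := MvPolynomial (Fin r) ℂ) (M := N)
  refine ⟨s, n, fun m => ?_⟩
  have hm : m ∈ Submodule.span (MvPolynomial (Fin r) ℂ) (Set.range n) := by rw [hn]; trivial
  exact (Submodule.mem_span_range_iff_exists_fun _).1 hm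

lemma AuxGr.upper (h : AuxGr 𝒩 π b e) [Finite ι] {r : ℕ} (g : MvPolynomial (Fin r) ℂ →ₐ[ℂ] B)
    (hg : g.Finite) [Module.Finite B N] :
    ∃ (s D0 D : ℕ) (W : ℕ → Submodule ℂ N), (∀ j, FiniteDimensional ℂ (W j)) ∧
      (∀ j, Module.finrank ℂ (W j) ≤ s * (j + 1) ^ r) ∧ Monotone W ∧
      ∀ d, 𝒩 d ≤ W (D0 + D * d) := by
  classical
  have := Fintype.ofFinite ι
  obtain ⟨s, n, hn⟩ := aux_finite_gens (N := N) g hg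
  let W : ℕ → Submodule ℂ N := fun j => LinearMap.range (auxPhi g n j)
  have hmono : Monotone W := fun j j' hj => range_auxPhi_mono g n hj
  have hex : ∀ m : N, ∃ j, m ∈ W j := by
    intro m
    obtain ⟨p, hp⟩ := hn m
    refine ⟨Finset.univ.sup fun k => (p k).totalDegree, ?_⟩
    refine (mem_range_auxPhi g n _ m).2 ⟨p, fun k => ?_, hp⟩
    exact aux_restrictDegree_mono r
      (Finset.le_sup (f := fun k => (p k).totalDegree) (Finset.mem_univ k))
      (aux_restrictDegree_exists r (p k))
  choose lev hlev using hex
  let D : ℕ := Finset.univ.sup fun x : ι × Fin s => lev (b x.1 • n x.2)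
  have hbW : ∀ i j m, m ∈ W j → b i • m ∈ W (j + D) := by
    intro i j m hm
    obtain ⟨p, hp, rfl⟩ := (mem_range_auxPhi g n _ m).1 hm
    rw [Finset.smul_sum]
    refine sum_mem fun k _ => ?_
    rw [smul_comm]
    refine range_auxPhi_smul g n _ (hp k) _ ?_
    exact hmono (Finset.le_sup (f := fun x : ι × Fin s => lev (b x.1 • n x.2))
      (Finset.mem_univ (i, k))) (hlev _)
  obtain ⟨S, hS⟩ := (Module.Finite.fg_top : (⊤ : Submodule B N).FG)
  choose T hT using h.fin
  let D0 : ℕ := S.sup fun y => (Finset.range (T y)).sup fun d => lev (π d y)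
  have hD0 : ∀ y ∈ S, ∀ d, π d y ∈ W D0 := by
    intro y hy d
    rcases lt_or_ge d (T y) with hd | hd
    · refine hmono ?_ (hlev (π d y))
      exact (Finset.le_sup (f := fun d => lev (π d y)) (Finset.mem_range.2 hd)).trans
        (Finset.le_sup (f := fun y => (Finset.range (T y)).sup fun d => lev (π d y)) hy)
    · rw [hT y d hd]; exact zero_mem _
  refine ⟨s, D0, D, W, fun j => inferInstance, fun j => finrank_range_auxPhi g n j, hmono, ?_⟩
  intro d
  induction d using Nat.strong_induction_on with
  | _ d ih =>
  intro m hm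
  let L : Submodule B N := ⨆ i, (⊤ : Submodule B N).map (LinearMap.lsmul B N (b i))
  obtain ⟨y, hy, hmy⟩ := h.span ⊤ L le_top (fun i m _ =>
    (le_iSup (fun i => (⊤ : Submodule B N).map (LinearMap.lsmul B N (b i))) i) ⟨m, trivial, rfl⟩)
    S hS m trivial
  have h1 : π d y ∈ W D0 := by
    have : Submodule.span ℂ (S : Set N) ≤ (W D0).comap (π d) := by
      rw [Submodule.span_le]
      intro y hy
      exact hD0 y hy d
    exact this hy
  have h2 : ∀ l ∈ L, π d l ∈ W (D0 + D * d) := by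
    intro l hl
    induction hl using Submodule.iSup_induction' with
    | mem i x hx =>
      obtain ⟨z, -, rfl⟩ := hx
      change π d (b i • z) ∈ _
      rcases lt_or_ge d (e i) with hd | hd
      · rw [h.low i d z hd]; exact zero_mem _
      · obtain ⟨d', rfl⟩ := Nat.exists_eq_add_of_le' hd
        rw [h.comm]
        have hp := h.epos i
        have h3 := hbW i _ _ (ih d' (by omega) (h.mem d' z))
        refine hmono ?_ h3
        nlinarith
    | zero => simp
    | add x y hx hy ihx ihy => rw [map_add]; exact add_mem ihx ihy
  have h3 : m = π d y + π d (m - y) := by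
    rw [← map_add, add_sub_cancel, h.same d m hm]
  rw [h3]
  exact add_mem (hmono (by omega) h1) (h2 _ hmy)

lemma AuxGr.sum_le (h : AuxGr 𝒩 π b e) (d : ℕ) (W : Submodule ℂ N) [FiniteDimensional ℂ W]
    [∀ d, FiniteDimensional ℂ (𝒩 d)]
    (hW : ∀ i < d, 𝒩 i ≤ W) : ∑ i ∈ Finset.range d, Module.finrank ℂ (𝒩 i) ≤ Module.finrank ℂ W := by
  let Ψ : (∀ i : Fin d, 𝒩 i) →ₗ[ℂ] W :=
    ∑ i : Fin d, Submodule.inclusion (hW i i.2) ∘ₗ LinearMap.proj i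
  have hΨ : ∀ v, ((Ψ v : W) : N) = ∑ i, (v i : N) := by
    intro v
    simp [Ψ]
  have hinj : Function.Injective Ψ := by
    rw [← LinearMap.ker_eq_bot, LinearMap.ker_eq_bot']
    intro v hv
    have h0 : ∑ i, (v i : N) = 0 := by rw [← hΨ, hv]; rfl
    ext j
    have h1 : π j (∑ i, (v i : N)) = v j := by
      rw [map_sum, Finset.sum_eq_single j]
      · exact h.same _ _ (v j).2
      · intro i _ hij
        exact h.ne i j _ (v i).2 (fun hh => hij (Fin.ext hh))
      · simp
    rw [h0, map_zero] at h1
    exact h1.symm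
  have := LinearMap.finrank_le_finrank_of_injective hinj
  rwa [Module.finrank_pi_fintype, Fin.sum_univ_eq_sum_range
    (fun i => Module.finrank ℂ (𝒩 i))] at this

def AuxLvl (π : ℕ → N →ₗ[ℂ] N) (β : B) (E : ℕ) : Prop :=
  ∀ (m : N) (D : ℕ), (∀ d, D ≤ d → π d m = 0) → ∀ d, D + E ≤ d → π d (β • m) = 0

lemma AuxLvl.mono {β : B} {E E' : ℕ} (h : AuxLvl π β E) (hE : E ≤ E') : AuxLvl π β E' :=
  fun m D hm d hd => h m D hm d (by omega)

lemma AuxLvl.add {β β' : B} {E : ℕ} (h : AuxLvl π β E) (h' : AuxLvl π β' E) :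
    AuxLvl π (β + β') E := fun m D hm d hd => by
  rw [add_smul, map_add, h m D hm d hd, h' m D hm d hd, add_zero]

lemma AuxLvl.sum {α : Type} (s : Finset α) (f : α → B) {E : ℕ} (h : ∀ a ∈ s, AuxLvl π (f a) E) :
    AuxLvl π (∑ a ∈ s, f a) E := fun m D hm d hd => by
  rw [Finset.sum_smul, map_sum]
  exact Finset.sum_eq_zero fun a ha => h a ha m D hm d hd

lemma AuxLvl.mul {β β' : B} {E E' : ℕ} (h : AuxLvl π β E) (h' : AuxLvl π β' E') :
    AuxLvl π (β * β') (E + E') := fun m D hm d hd => by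
  rw [mul_smul]
  exact h (β' • m) (D + E') (h' m D hm) d (by omega)

lemma AuxLvl.alg (c : ℂ) : AuxLvl π (algebraMap ℂ B c) 0 := fun m D hm d hd => by
  rw [algebraMap_smul, map_smul, hm d (by omega), smul_zero]

lemma AuxLvl.one : AuxLvl π (1 : B) 0 := by
  simpa using AuxLvl.alg (B := B) (π := π) 1

lemma AuxLvl.pow {β : B} {E : ℕ} (h : AuxLvl π β E) (k : ℕ) : AuxLvl π (β ^ k) (k * E) := by
  induction k with
  | zero => simpa using AuxLvl.one
  | succ k ih => rw [pow_succ, Nat.succ_mul]; exact ih.mul h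

lemma AuxLvl.prod {α : Type} (s : Finset α) (f : α → B) (E : α → ℕ)
    (h : ∀ a ∈ s, AuxLvl π (f a) (E a)) : AuxLvl π (∏ a ∈ s, f a) (∑ a ∈ s, E a) := by
  classical
  induction s using Finset.induction_on with
  | empty => simpa using AuxLvl.one
  | insert a s ha ih =>
    rw [Finset.prod_insert ha, Finset.sum_insert ha]
    exact (h a (by simp)).mul (ih fun a' h' => h a' (by simp [h']))

lemma AuxGr.lvl (h : AuxGr 𝒩 π b e) (β : B) : ∃ E, AuxLvl π β E := by
  have hβ : β ∈ Algebra.adjoin ℂ (Set.range b) := by rw [h.gen]; trivial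
  induction hβ using Algebra.adjoin_induction with
  | mem x hx =>
    obtain ⟨i, rfl⟩ := hx
    refine ⟨e i, fun m D hm d hd => ?_⟩
    obtain ⟨d', rfl⟩ := Nat.exists_eq_add_of_le' (show e i ≤ d by omega)
    rw [h.comm, hm d' (by omega), smul_zero]
  | algebraMap c => exact ⟨0, AuxLvl.alg c⟩
  | add x y hx hy ihx ihy =>
    obtain ⟨E, hE⟩ := ihx
    obtain ⟨E', hE'⟩ := ihy
    exact ⟨max E E', (hE.mono (le_max_left _ _)).add (hE'.mono (le_max_right _ _))⟩
  | mul x y hx hy ihx ihy =>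
    obtain ⟨E, hE⟩ := ihx
    obtain ⟨E', hE'⟩ := ihy
    exact ⟨E + E', hE.mul hE'⟩

lemma AuxGr.lower (h : AuxGr 𝒩 π b e) {r : ℕ} (g : MvPolynomial (Fin r) ℂ →ₐ[ℂ] B)
    (hg : Function.Injective g) [∀ d, FiniteDimensional ℂ (𝒩 d)]
    (htf : ∀ (b : B) (n : N), b • n = 0 → b = 0 ∨ n = 0) [Nontrivial N] :
    ∃ E a : ℕ, 0 < E ∧ ∀ j, (j + 1) ^ r ≤
      ∑ i ∈ Finset.range (E * j + a), Module.finrank ℂ (𝒩 i) := by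
  classical
  obtain ⟨n0, hn0⟩ := exists_ne (0 : N)
  obtain ⟨a, ha⟩ := h.fin n0
  choose E hE using fun t : Fin r => h.lvl (g (MvPolynomial.X t))
  have key : ∀ j, ∀ p ∈ MvPolynomial.restrictDegree (Fin r) ℂ j,
      AuxLvl π (g p) ((∑ t, E t + 1) * j) := by
    intro j p hp
    rw [MvPolynomial.mem_restrictDegree] at hp
    rw [p.as_sum, map_sum]
    refine AuxLvl.sum _ _ fun u hu => ?_
    rw [MvPolynomial.monomial_eq, map_mul, Finsupp.prod_fintype _ _ (by simp), map_prod]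
    have h1 : AuxLvl π (g (MvPolynomial.C (p.coeff u))) 0 := by
      have := AuxLvl.alg (B := B) (π := π) (p.coeff u)
      rwa [← AlgHom.commutes g] at this
    have h2 := AuxLvl.prod (π := π) Finset.univ (fun t => g (MvPolynomial.X t ^ (u t)))
      (fun t => u t * E t) (fun t _ => by rw [map_pow]; exact (hE t).pow _)
    refine (h1.mul h2).mono ?_
    rw [zero_add, add_mul, Finset.sum_mul]
    refine le_trans (Finset.sum_le_sum fun t _ => ?_) (Nat.le_add_right _ _)
    rw [mul_comm]
    exact Nat.mul_le_mul_left _ (hp u hu t)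
  refine ⟨∑ t, E t + 1, a, by omega, fun j => ?_⟩
  set M := (∑ t, E t + 1) * j + a with hM
  let Ψ : MvPolynomial.restrictDegree (Fin r) ℂ j →ₗ[ℂ] (∀ i : Fin M, 𝒩 i) :=
    LinearMap.pi fun i => (LinearMap.codRestrict (𝒩 i) (π i) (fun m => h.mem i m)) ∘ₗ
      ((LinearMap.toSpanSingleton B N n0).restrictScalars ℂ ∘ₗ g.toLinearMap ∘ₗ
    (MvPolynomial.restrictDegree (Fin r) ℂ j).subtype)
  have hinj : Function.Injective Ψ := by
    rw [← LinearMap.ker_eq_bot, LinearMap.ker_eq_bot']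
    rintro ⟨p, hp⟩ hv
    have h0 : g p • n0 = 0 := by
      apply h.zero
      intro d
      rcases lt_or_ge d M with hd | hd
      · have := congrArg Subtype.val (congrFun hv ⟨d, hd⟩)
        exact this
      · exact key j p hp n0 a ha d (by omega)
    rcases htf _ _ h0 with h1 | h1
    · ext1
      exact hg (by rw [h1]; simp)
    · exact absurd h1 hn0
  have := LinearMap.finrank_le_finrank_of_injective hinj
  rwa [Module.finrank_pi_fintype, Fin.sum_univ_eq_sum_range
    (fun i => Module.finrank ℂ (𝒩 i)), aux_finrank_restrictDegree] at this

end Bounds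

lemma aux_gens {B : Type} [CommRing B] [Algebra ℂ B] (ℬ : ℕ → Submodule ℂ B) [GradedAlgebra ℬ]
    (hfg : Algebra.FiniteType ℂ B) (h0 : ℬ 0 = Submodule.span ℂ {1}) :
    ∃ (ι : Type) (_ : Finite ι) (b : ι → B) (e : ι → ℕ), (∀ i, b i ∈ ℬ (e i)) ∧ (∀ i, 0 < e i) ∧
      Algebra.adjoin ℂ (Set.range b) = ⊤ := by
  classical
  obtain ⟨F, hF⟩ := hfg.out
  let ι₀ := Σ (x : F), (DirectSum.decompose ℬ x.1).support
  let ι₁ := {i : ι₀ // 0 < (i.2 : ℕ)}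
  refine ⟨ι₁, inferInstance, fun i => (DirectSum.decompose ℬ i.1.1.1 i.1.2 : B), fun i => i.1.2,
    fun i => (DirectSum.decompose ℬ i.1.1.1 i.1.2).2, fun i => i.2, ?_⟩
  rw [← top_le_iff, ← hF, Algebra.adjoin_le_iff]
  intro s hs
  rw [← DirectSum.sum_support_decompose ℬ s]
  refine sum_mem fun n hn => ?_
  rcases Nat.eq_zero_or_pos n with rfl | hpos
  · have h1 : ∀ y ∈ ℬ 0, ∃ c : ℂ, c • (1 : B) = y := by
      intro y hy
      rw [h0] at hy
      exact Submodule.mem_span_singleton.1 hy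
    obtain ⟨c, hc⟩ := h1 _ (DirectSum.decompose ℬ s 0).2
    rw [← hc, ← Algebra.algebraMap_eq_smul_one]
    exact Subalgebra.algebraMap_mem _ _
  · exact Algebra.subset_adjoin ⟨⟨⟨⟨s, hs⟩, ⟨n, hn⟩⟩, hpos⟩, rfl⟩

lemma aux_auxGr {B N ι : Type} [CommRing B] [Algebra ℂ B] (ℬ : ℕ → Submodule ℂ B)
    [AddCommGroup N] [Module ℂ N] [Module B N] (𝒩 : ℕ → Submodule ℂ N)
    (hinternal : DirectSum.IsInternal 𝒩)
    (hgr : ∀ (d e : ℕ) (b : B) (n : N), b ∈ ℬ d → n ∈ 𝒩 e → b • n ∈ 𝒩 (d + e))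
    (b : ι → B) (e : ι → ℕ) (hb : ∀ i, b i ∈ ℬ (e i)) (he : ∀ i, 0 < e i)
    (hgen : Algebra.adjoin ℂ (Set.range b) = ⊤) :
    ∃ π : ℕ → N →ₗ[ℂ] N, AuxGr 𝒩 π b e := by
  classical
  let _ := hinternal.chooseDecomposition
  let π : ℕ → N →ₗ[ℂ] N := fun d => (𝒩 d).subtype ∘ₗ
    DirectSum.component ℂ ℕ (fun i => 𝒩 i) d ∘ₗ (DirectSum.decomposeLinearEquiv 𝒩).toLinearMap
  have hπ : ∀ d m, π d m = (DirectSum.decompose 𝒩 m d : N) := fun d m => rfl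
  have same : ∀ d m, m ∈ 𝒩 d → π d m = m := fun d m hm => by
    rw [hπ, DirectSum.decompose_of_mem_same 𝒩 hm]
  have ne : ∀ d d' m, m ∈ 𝒩 d → d ≠ d' → π d' m = 0 := fun d d' m hm hd => by
    rw [hπ, DirectSum.decompose_of_mem_ne 𝒩 hm hd]
  have ind : ∀ (P : N → Prop), (∀ d m, m ∈ 𝒩 d → P m) → P 0 → (∀ x y, P x → P y → P (x + y)) →
      ∀ m, P m := by
    intro P h1 h2 h3 m
    have hm : m ∈ ⨆ d, 𝒩 d := by rw [hinternal.submodule_iSup_eq_top]; trivial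
    exact Submodule.iSup_induction 𝒩 (motive := P) hm h1 h2 h3
  refine ⟨π, ⟨fun d m => (DirectSum.decompose 𝒩 m d).2, same, ne, ?_, ?_, ?_, ?_, he, hgen⟩⟩
  · intro m hm
    have : DirectSum.decompose 𝒩 m = 0 := by
      refine DFinsupp.ext fun d => Subtype.ext ?_
      exact hm d
    exact (DirectSum.decompose 𝒩).injective (this.trans (DirectSum.decompose_zero 𝒩).symm)
  · refine ind _ ?_ ⟨0, by simp⟩ ?_
    · intro d m hm
      exact ⟨d + 1, fun d' hd' => ne d d' m hm (by omega)⟩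
    · rintro x y ⟨D, hD⟩ ⟨D', hD'⟩
      exact ⟨max D D', fun d hd => by
        rw [map_add, hD d (le_trans (le_max_left _ _) hd), hD' d (le_trans (le_max_right _ _) hd),
          add_zero]⟩
  · intro i d
    refine ind _ ?_ (by simp) ?_
    · intro k m hm
      have h1 := hgr _ _ _ _ (hb i) hm
      by_cases hk : k = d
      · subst hk
        rw [same k m hm, same _ _ (by rwa [add_comm])]
      · rw [ne k d m hm hk, ne _ _ _ h1 (by omega), smul_zero]
    · intro x y hx hy
      rw [smul_add, map_add, map_add, smul_add, hx, hy]
  · intro i d m hd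
    revert m
    refine ind _ ?_ (by simp) ?_
    · intro k m hm
      exact ne _ _ _ (hgr _ _ _ _ (hb i) hm) (by omega)
    · intro x y hx hy
      rw [smul_add, map_add, hx, hy, add_zero]

open Filter in
lemma aux_numeric (f : ℕ → ℕ) (hmono : Monotone f) (r s D0 D E a : ℕ) (hE : 0 < E)
    (hup : ∀ d, ∑ i ∈ Finset.range d, f i ≤ s * (D0 + D * d + 1) ^ r)
    (hlow : ∀ j, (j + 1) ^ r ≤ ∑ i ∈ Finset.range (E * j + a), f i) :
    ∃ c C' : ℚ, 0 < c ∧ ∀ᶠ d : ℕ in atTop, c * (d : ℚ) ^ (r - 1) ≤ f d ∧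
      (f d : ℚ) ≤ C' * (d : ℚ) ^ (r - 1) := by
  have h1 : ∀ d, d * f d ≤ ∑ i ∈ Finset.range (2 * d), f i := by
    intro d
    rw [two_mul, Finset.sum_range_add]
    refine le_trans ?_ (Nat.le_add_left _ _)
    have := Finset.card_nsmul_le_sum (Finset.range d) (fun i => f (d + i)) (f d)
      (fun i _ => hmono (Nat.le_add_right _ _))
    simpa using this
  have h2 : ∀ d, ∑ i ∈ Finset.range d, f i ≤ d * f d := by
    intro d
    have := Finset.sum_le_card_nsmul (Finset.range d) f (f d)
      (fun i hi => hmono (Finset.mem_range.1 hi).le)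
    simpa using this
  have h3 : ∀ d, 1 ≤ d → d * f d ≤ s * (D0 + 2 * D + 1) ^ r * d ^ r := by
    intro d hd
    refine (h1 d).trans ((hup _).trans ?_)
    rw [mul_assoc, ← mul_pow]
    gcongr
    nlinarith
  cases r with
  | zero =>
    exfalso
    have h4 := (hlow 0).trans (h2 _)
    simp only [mul_zero, zero_add, pow_zero] at h4
    have h5 : 1 ≤ f a := by
      rcases Nat.eq_zero_or_pos (f a) with h | h
      · rw [h] at h4; simp at h4
      · exact h
    have h6 := h3 (a + s + 1) (by omega)
    have h7 : 1 ≤ f (a + s + 1) := h5.trans (hmono (by omega))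
    simp at h6
    nlinarith
  | succ k =>
    refine ⟨(1 / (2 * E : ℚ)) ^ (k + 1), (s * (D0 + 2 * D + 1) ^ (k + 1) : ℕ), by positivity, ?_⟩
    filter_upwards [eventually_ge_atTop (2 * a + 1)] with d hd
    have hd0 : (0 : ℚ) < d := by exact_mod_cast (show 0 < d by omega)
    simp only [Nat.add_sub_cancel]
    constructor
    · let j := (d - a) / E
      have hj1 : E * j ≤ d - a := Nat.mul_div_le _ _
      have hj2 : d - a < E * (j + 1) := by
        rw [mul_comm]; exact Nat.lt_mul_of_div_lt (Nat.lt_succ_self _) hE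
      have h4 : (j + 1) ^ (k + 1) ≤ d * f d := by
        refine (hlow j).trans (le_trans ?_ (h2 d))
        exact Finset.sum_le_sum_of_subset (Finset.range_mono (by omega))
      have h5 : d ≤ 2 * (E * (j + 1)) := by omega
      have h6 : 1 / (2 * E : ℚ) * d ≤ (j + 1 : ℕ) := by
        rw [one_div, inv_mul_le_iff₀ (by positivity)]
        have : (d : ℚ) ≤ ((2 * (E * (j + 1)) : ℕ) : ℚ) := by exact_mod_cast h5
        refine this.trans (le_of_eq ?_)
        push_cast; ring
      have h7 : (1 / (2 * E : ℚ) * d) ^ (k + 1) ≤ d * f d := by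
        calc (1 / (2 * E : ℚ) * d) ^ (k + 1) ≤ ((j + 1 : ℕ) : ℚ) ^ (k + 1) := by gcongr
          _ ≤ d * f d := by exact_mod_cast h4
      refine le_of_mul_le_mul_left ?_ hd0
      refine le_trans (le_of_eq ?_) h7
      rw [mul_pow]; ring
    · have h4 : (d : ℚ) * f d ≤ ((s * (D0 + 2 * D + 1) ^ (k + 1) * d ^ (k + 1) : ℕ) : ℚ) := by
        exact_mod_cast h3 d (by omega)
      refine le_of_mul_le_mul_left (h4.trans (le_of_eq ?_)) hd0
      push_cast; ring

/-- Let `B` be a finitely generated graded integral domain over `ℂ`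
of Krull dimension `r`, with `B₀ = ℂ` and containing a nonzero degree-one
element, and let `N` be a nonzero finitely generated torsion-free graded
`B`-module.  Then `d ↦ dim_ℂ N_d` agrees for `d ≫ 0` with a quasi-polynomial of
degree `r − 1` whose leading coefficient is a positive constant `A` independent
of the residue class: `dim_ℂ N_d ∼ A · d^(r-1)`. -/
theorem hilbert_function_quasipolynomial_of_degree_krullDim_sub_one
    (B : Type) [CommRing B] [IsDomain B] [Algebra ℂ B]
    (ℬ : ℕ → Submodule ℂ B) [GradedAlgebra ℬ]
    (hfg : Algebra.FiniteType ℂ B)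
    (h0 : ℬ 0 = Submodule.span ℂ {1})
    (hgen : ∀ d : ℕ, 0 < d → (ℬ d : Set B) ⊆ Algebra.adjoin ℂ (⋃ e : ℕ, ((ℬ (e + 1) : Submodule ℂ B) : Set B)))
    (r : ℕ) (hr : ringKrullDim B = r)
    (x : B) (hx : x ∈ ℬ 1) (hx0 : x ≠ 0)
    (N : Type) [AddCommGroup N] [Module ℂ N] [Module B N]
    [IsScalarTower ℂ B N] [SMulCommClass B ℂ N]
    (𝒩 : ℕ → Submodule ℂ N)
    (hinternal : DirectSum.IsInternal 𝒩)
    (hgr : ∀ (d e : ℕ) (b : B) (n : N), b ∈ ℬ d → n ∈ 𝒩 e → b • n ∈ 𝒩 (d + e))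
    (hNfg : Module.Finite B N)
    (htf : ∀ (b : B) (n : N), b • n = 0 → b = 0 ∨ n = 0)
    (hN0 : Nontrivial N) :
    ∃ (p : ℕ) (_ : 0 < p) (q : ℕ → Polynomial ℚ) (A : ℚ),
      0 < A ∧
      (∀ i : ℕ, i < p → (q i).natDegree = r - 1 ∧ (q i).leadingCoeff = A) ∧
      ∃ D : ℕ, ∀ d : ℕ, D ≤ d →
        (Module.finrank ℂ (𝒩 d) : ℚ) = (q (d % p)).eval (d : ℚ) := by
  obtain ⟨g, hginj, hgfin⟩ := aux_noether B hfg r hr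
  obtain ⟨ι, hι, b, e, hb, he, hadj⟩ := aux_gens ℬ hfg h0
  obtain ⟨π, h⟩ := aux_auxGr ℬ 𝒩 hinternal hgr b e hb he hadj
  obtain ⟨s, D0, D, W, hWfd, hWr, hWm, hW⟩ := h.upper g hgfin
  have hfd : ∀ d, FiniteDimensional ℂ (𝒩 d) := fun d =>
    have := hWfd (D0 + D * d)
    Submodule.finiteDimensional_of_le (hW d)
  have : IsNoetherianRing B := Algebra.FiniteType.isNoetherianRing ℂ B
  have : IsNoetherian B N := isNoetherian_of_isNoetherianRing_of_finite B N
  have hqp := h.hilbert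
  obtain ⟨E, a, hE, hlow⟩ := h.lower g hginj htf
  have hmono : ∀ d, Module.finrank ℂ (𝒩 d) ≤ Module.finrank ℂ (𝒩 (d + 1)) := by
    intro d
    let T : 𝒩 d →ₗ[ℂ] 𝒩 (d + 1) :=
      ((LinearMap.lsmul B N x).restrictScalars ℂ).restrict (fun m hm => by
        have := hgr 1 d x m hx hm
        rw [add_comm] at this
        exact this)
    apply LinearMap.finrank_le_finrank_of_injective (f := T)
    rw [← LinearMap.ker_eq_bot, LinearMap.ker_eq_bot']
    intro m hm
    have h1 : x • (m : N) = 0 := congrArg Subtype.val hm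
    rcases htf _ _ h1 with h2 | h2
    · exact absurd h2 hx0
    · exact Subtype.ext h2
  obtain ⟨c, C', hc, hcC⟩ := aux_numeric (fun d => Module.finrank ℂ (𝒩 d))
    (monotone_nat_of_le_succ hmono) r s D0 D E a hE (by
      intro d
      have := hWfd (D0 + D * d)
      refine (h.sum_le d (W (D0 + D * d)) fun i hi => ?_).trans (hWr _)
      exact (hW i).trans (hWm (by gcongr))) hlow
  exact aux_final _ hqp (fun d => by exact_mod_cast hmono d) (r - 1) c C' hc hcC
end
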